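/- arXiv:math/0406574 — 2 statements merged into one kernel-verified Lean document; each statement's English description precedes it below -/
import Mathlib

section
/- (Morris-type recurrence for B_n.) Let n ≥ 2 and let ν = (ν_n,…,ν_1), μ = (μ_n,…,μ_1) ∈ ℤ^n with ν_n ≥ … ≥ ν_1 ≥ 0 and μ_n ≥ … ≥ μ_1 ≥ 0. For k ∈ {1,…,n} set R_k = ν_k + k − μ_n − n and γ_k = (ν_n + 1, ν_{n−1} + 1, …, ν_{k+1} + 1, ν_{k−1}, …, ν_1) ∈ ℤ^{n−1} (a dominant weight of type B_{n−1}), and set μ' = (μ_{n−1},…,μ_1). Then K^{B_n}_{ν,μ}(q) = Σ_{k ∈ {1,…,n}, R_k ≥ 0} (−1)^{n−k} · q^{R_k} · Σ_{(r,m) ∈ ℕ², r + 2m = R_k} Σ_λ b^λ_{γ_k,r} · K^{B_{n−1}}_{λ,μ'}(q), where the innermost sum is over all dominant weights λ of type B_{n−1} with integer coordinates (only finitely many terms are nonzero). -/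
open scoped BigOperators

noncomputable section

/-- The `q`-analogue of Kostant's partition function attached to the finite set `R`
of positive roots: the coefficient of `q^k` is the number of families
`(m_α)_{α ∈ R}` of nonnegative integers with `∑ m_α = k` and `∑ m_α • α = β`. -/
def kostantQ {n : ℕ} (R : Finset (Fin n → ℚ)) (β : Fin n → ℚ) : PowerSeries ℤ :=
  PowerSeries.mk fun k =>
    (Nat.card {m : {α // α ∈ R} → ℕ //
      (∑ α, m α) = k ∧ (∑ α, (m α : ℚ) • (α : Fin n → ℚ)) = β} : ℤ)

/-- Positive roots of type `D_n` : `e_i - e_j` and `e_i + e_j` for `j < i`. -/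
def rootsD (n : ℕ) : Finset (Fin n → ℚ) :=
  ((Finset.univ : Finset (Fin n × Fin n)).filter fun p => p.2 < p.1).image
      (fun p => Pi.single p.1 (1 : ℚ) - Pi.single p.2 1) ∪
  ((Finset.univ : Finset (Fin n × Fin n)).filter fun p => p.2 < p.1).image
      (fun p => Pi.single p.1 (1 : ℚ) + Pi.single p.2 1)

/-- Positive roots of type `B_n`. -/
def rootsB (n : ℕ) : Finset (Fin n → ℚ) :=
  rootsD n ∪ (Finset.univ : Finset (Fin n)).image fun i => Pi.single i (1 : ℚ)

/-- Positive roots of type `C_n`. -/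
def rootsC (n : ℕ) : Finset (Fin n → ℚ) :=
  rootsD n ∪ (Finset.univ : Finset (Fin n)).image fun i => Pi.single i (2 : ℚ)

/-- Positive roots of type `A_{n-1}` : `e_i - e_j` for `j < i`. -/
def rootsA (n : ℕ) : Finset (Fin n → ℚ) :=
  ((Finset.univ : Finset (Fin n × Fin n)).filter fun p => p.2 < p.1).image
      fun p => Pi.single p.1 (1 : ℚ) - Pi.single p.2 1

/-- `ρ` of type `B_n` : `e_i`-coordinate `i - 1/2` (`0`-based index `i ↦ i + 1/2`). -/
def rhoB (n : ℕ) : Fin n → ℚ := fun i => ((i : ℕ) : ℚ) + 1/2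

/-- `ρ` of type `C_n` : `e_i`-coordinate `i`. -/
def rhoC (n : ℕ) : Fin n → ℚ := fun i => ((i : ℕ) : ℚ) + 1

/-- `ρ` of type `D_n` : `e_i`-coordinate `i - 1`. -/
def rhoD (n : ℕ) : Fin n → ℚ := fun i => ((i : ℕ) : ℚ)

/-- `ρ` of type `A_{n-1}` : `e_i`-coordinate `i - 1`. -/
def rhoA (n : ℕ) : Fin n → ℚ := fun i => ((i : ℕ) : ℚ)

/-- The signed permutation `(σ, ε)` acting on a weight: it maps `e_j` to `± e_{σ j}`. -/
def wAct {n : ℕ} (σ : Equiv.Perm (Fin n)) (ε : Fin n → Bool) (β : Fin n → ℚ) :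
    Fin n → ℚ := fun i => (if ε i then -1 else 1) * β (σ⁻¹ i)

/-- The determinant (sign) of the signed permutation `(σ, ε)`. -/
def wDet {n : ℕ} (σ : Equiv.Perm (Fin n)) (ε : Fin n → Bool) : ℤ :=
  (Equiv.Perm.sign σ : ℤ) * ∏ i, (if ε i then (-1 : ℤ) else 1)

/-- Kostka-Foulkes polynomial of type `B_n`, as a power series in `q`. -/
def KB (n : ℕ) (lam mu : Fin n → ℚ) : PowerSeries ℤ :=
  ∑ σ : Equiv.Perm (Fin n), ∑ ε : Fin n → Bool,
    wDet σ ε • kostantQ (rootsB n) (wAct σ ε (lam + rhoB n) - (mu + rhoB n))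

/-- Kostka-Foulkes polynomial of type `C_n`, as a power series in `q`. -/
def KC (n : ℕ) (lam mu : Fin n → ℚ) : PowerSeries ℤ :=
  ∑ σ : Equiv.Perm (Fin n), ∑ ε : Fin n → Bool,
    wDet σ ε • kostantQ (rootsC n) (wAct σ ε (lam + rhoC n) - (mu + rhoC n))

/-- Kostka-Foulkes polynomial of type `D_n`, as a power series in `q` (the Weyl group
consists of the signed permutations with an even number of sign changes). -/
def KD (n : ℕ) (lam mu : Fin n → ℚ) : PowerSeries ℤ :=
  ∑ σ : Equiv.Perm (Fin n), ∑ ε : Fin n → Bool,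
    if (∏ i, (if ε i then (-1 : ℤ) else 1)) = 1 then
      wDet σ ε • kostantQ (rootsD n) (wAct σ ε (lam + rhoD n) - (mu + rhoD n))
    else 0

/-- Kostka-Foulkes polynomial of type `A_{n-1}`, as a power series in `q`. -/
def KA (n : ℕ) (lam mu : Fin n → ℚ) : PowerSeries ℤ :=
  ∑ σ : Equiv.Perm (Fin n),
    (Equiv.Perm.sign σ : ℤ) •
      kostantQ (rootsA n) ((fun i => (lam + rhoA n) (σ⁻¹ i)) - (mu + rhoA n))

/-- Dominant weight of type `B_n` : `λ_n ≥ ⋯ ≥ λ_1 ≥ 0`, all coordinates in `ℤ`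
or all in `ℤ + 1/2`. -/
def DominantB {n : ℕ} (lam : Fin n → ℚ) : Prop :=
  Monotone lam ∧ (∀ i, 0 ≤ lam i) ∧
    ((∀ i, ∃ z : ℤ, lam i = z) ∨ (∀ i, ∃ z : ℤ, lam i = z + 1/2))

/-- Dominant weight of type `C_n` : `λ_n ≥ ⋯ ≥ λ_1 ≥ 0`, integer coordinates. -/
def DominantC {n : ℕ} (lam : Fin n → ℚ) : Prop :=
  Monotone lam ∧ (∀ i, 0 ≤ lam i) ∧ ∀ i, ∃ z : ℤ, lam i = z

/-- Dominant weight of type `D_n` : `λ_n ≥ ⋯ ≥ λ_2 ≥ |λ_1|`, all coordinates in `ℤ`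
or all in `ℤ + 1/2`. -/
def DominantD {n : ℕ} (lam : Fin n → ℚ) : Prop :=
  (∀ i j : Fin n, i ≤ j → 0 < (i : ℕ) → lam i ≤ lam j) ∧
  (∀ h : 0 < n, ∀ j : Fin n, 0 < (j : ℕ) → |lam ⟨0, h⟩| ≤ lam j) ∧
  ((∀ i, ∃ z : ℤ, lam i = z) ∨ (∀ i, ∃ z : ℤ, lam i = z + 1/2))

/-- Restriction of a weight of rank `n` to the first `n - 1` coordinates
(i.e. forgetting the `e_n`-coordinate). -/
def restrict1 {n : ℕ} (lam : Fin n → ℚ) : Fin (n - 1) → ℚ :=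
  fun i => lam ⟨(i : ℕ), by have := i.2; omega⟩

/-- Pieri number `b^λ_{γ,r}` of type `B_n`. -/
def bPieri {m : ℕ} (γ lam : Fin m → ℚ) (r : ℕ) : ℕ :=
  Nat.card {t : (Fin m → ℕ) × (Fin m → ℕ) × Bool //
    ((cond t.2.2 1 0) + ∑ i, (t.1 i + t.2.1 i)) = r ∧
    (∀ i, ((t.2.1 i : ℚ) - (t.1 i : ℚ)) = lam i - γ i) ∧
    (∀ i : Fin m, ∀ h : (i : ℕ) + 1 < m,
      lam i ≤ lam ⟨(i : ℕ) + 1, h⟩ - (t.2.1 ⟨(i : ℕ) + 1, h⟩ : ℚ)) ∧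
    (∀ i : Fin m, ∀ h : (i : ℕ) + 1 < m,
      lam i + (t.1 i : ℚ) - (t.2.1 i : ℚ) ≤
        lam ⟨(i : ℕ) + 1, h⟩ - (t.2.1 ⟨(i : ℕ) + 1, h⟩ : ℚ)) ∧
    (∀ h : 0 < m,
      if t.2.2 then (0 : ℚ) < lam ⟨0, h⟩ - (t.2.1 ⟨0, h⟩ : ℚ)
      else (0 : ℚ) ≤ lam ⟨0, h⟩ - (t.2.1 ⟨0, h⟩ : ℚ))}

/-- Pieri number `c^λ_{γ,r}` of type `C_n`. -/
def cPieri {m : ℕ} (γ lam : Fin m → ℚ) (r : ℕ) : ℕ :=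
  Nat.card {t : (Fin m → ℕ) × (Fin m → ℕ) //
    (∑ i, (t.1 i + t.2 i)) = r ∧
    (∀ i, ((t.2 i : ℚ) - (t.1 i : ℚ)) = lam i - γ i) ∧
    (∀ i : Fin m, ∀ h : (i : ℕ) + 1 < m,
      lam i ≤ lam ⟨(i : ℕ) + 1, h⟩ - (t.2 ⟨(i : ℕ) + 1, h⟩ : ℚ)) ∧
    (∀ i : Fin m, ∀ h : (i : ℕ) + 1 < m,
      lam i + (t.1 i : ℚ) - (t.2 i : ℚ) ≤
        lam ⟨(i : ℕ) + 1, h⟩ - (t.2 ⟨(i : ℕ) + 1, h⟩ : ℚ)) ∧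
    (∀ h : 0 < m, (0 : ℚ) ≤ lam ⟨0, h⟩ - (t.2 ⟨0, h⟩ : ℚ))}

/-- Pieri number `d^λ_{γ,r}` of type `D_n`. -/
def dPieri {m : ℕ} (γ lam : Fin m → ℚ) (r : ℕ) : ℕ :=
  Nat.card {t : (Fin m → ℕ) × (Fin m → ℕ) //
    (∀ h : 0 < m, min (t.1 ⟨0, h⟩) (t.2 ⟨0, h⟩) = 0) ∧
    (∑ i, (t.1 i + t.2 i)) = r ∧
    (∀ i, ((t.2 i : ℚ) - (t.1 i : ℚ)) = lam i - γ i) ∧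
    (∀ h : 1 < m,
      (t.1 ⟨0, by omega⟩ = 0 →
        lam ⟨0, by omega⟩ ≤ lam ⟨1, h⟩ - (t.2 ⟨1, h⟩ : ℚ)) ∧
      (0 < t.1 ⟨0, by omega⟩ →
        -lam ⟨0, by omega⟩ ≤ lam ⟨1, h⟩ - (t.2 ⟨1, h⟩ : ℚ))) ∧
    (∀ i : Fin m, 1 ≤ (i : ℕ) → ∀ h : (i : ℕ) + 1 < m,
      lam i ≤ lam ⟨(i : ℕ) + 1, h⟩ - (t.2 ⟨(i : ℕ) + 1, h⟩ : ℚ)) ∧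
    (∀ i : Fin m, 1 ≤ (i : ℕ) → ∀ h : (i : ℕ) + 1 < m,
      lam i + (t.1 i : ℚ) - (t.2 i : ℚ) ≤
        lam ⟨(i : ℕ) + 1, h⟩ - (t.2 ⟨(i : ℕ) + 1, h⟩ : ℚ)) ∧
    (∀ h : 1 < m,
      (t.1 ⟨0, by omega⟩ = 0 → 0 ≤ γ ⟨0, by omega⟩ →
        lam ⟨0, by omega⟩ - (t.2 ⟨0, by omega⟩ : ℚ) ≤ lam ⟨1, h⟩ - (t.2 ⟨1, h⟩ : ℚ)) ∧
      (t.2 ⟨0, by omega⟩ = 0 → 0 ≤ γ ⟨0, by omega⟩ →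
        lam ⟨0, by omega⟩ + (t.1 ⟨0, by omega⟩ : ℚ) ≤ lam ⟨1, h⟩ - (t.2 ⟨1, h⟩ : ℚ)) ∧
      (t.2 ⟨0, by omega⟩ = 0 → γ ⟨0, by omega⟩ < 0 →
        -lam ⟨0, by omega⟩ - (t.1 ⟨0, by omega⟩ : ℚ) ≤ lam ⟨1, h⟩ - (t.2 ⟨1, h⟩ : ℚ)) ∧
      (t.1 ⟨0, by omega⟩ = 0 → γ ⟨0, by omega⟩ < 0 →
        -lam ⟨0, by omega⟩ + (t.2 ⟨0, by omega⟩ : ℚ) ≤ lam ⟨1, h⟩ - (t.2 ⟨1, h⟩ : ℚ)))}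

/-- The monomial `x^β = ∏ y_i ^ (2 β_i)` in the Laurent polynomial ring
`ℤ[y_1^{±1}, …, y_n^{±1}]`, realized as the group algebra of `ℤ^n`. -/
def xpow {n : ℕ} (β : Fin n → ℚ) : AddMonoidAlgebra ℤ (Fin n → ℤ) :=
  AddMonoidAlgebra.single (fun i => ⌊2 * β i⌋) 1

/-- The Weyl alternant `a_β = ∑_{σ ∈ W_{B_n}} det σ · x^{σ β}` of type `B_n`. -/
def altB {n : ℕ} (β : Fin n → ℚ) : AddMonoidAlgebra ℤ (Fin n → ℤ) :=
  ∑ σ : Equiv.Perm (Fin n), ∑ ε : Fin n → Bool, wDet σ ε • xpow (wAct σ ε β)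

/-- The Weyl alternant `a_β = ∑_{σ ∈ W_{D_n}} det σ · x^{σ β}` of type `D_n`. -/
def altD {n : ℕ} (β : Fin n → ℚ) : AddMonoidAlgebra ℤ (Fin n → ℤ) :=
  ∑ σ : Equiv.Perm (Fin n), ∑ ε : Fin n → Bool,
    if (∏ i, (if ε i then (-1 : ℤ) else 1)) = 1 then wDet σ ε • xpow (wAct σ ε β) else 0

end

section MorrisProof

open Finset

section
variable {A : Type*} [CommRing A]

/-- kernel -/
def kerK (t : A) (y z : ℕ) : A := t ^ (max y z - min y z) - t ^ (y + z + 1)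

/-- gap exponents -/
def gapE (y z : ℕ → ℕ) : ℕ → ℕ
  | 0 => 2 * min (y 0) (z 0) + 1
  | (i+1) => 2 * (min (y (i+1)) (z (i+1)) - max (y i) (z i))

lemma kerK_symm (t : A) (y z : ℕ) : kerK t y z = kerK t z y := by
  unfold kerK; rw [max_comm, min_comm, add_comm y z]

lemma gapE_symm (y z : ℕ → ℕ) (i : ℕ) : gapE y z i = gapE z y i := by
  cases i <;> simp [gapE, max_comm, min_comm]

lemma kerK_mul (t : A) (y z z' : ℕ) (h : y ≤ z) (h' : z ≤ z') :
    kerK t y z' = t ^ (z' - z) * kerK t y z := by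
  unfold kerK
  rw [mul_sub, ← pow_add, ← pow_add]
  congr 2 <;> grind

lemma kerK_last (t : A) (y z w : ℕ) (h : z < w) :
    kerK t y w - t ^ (w - z) * kerK t y z
      = t ^ (max y w - min y w) * (1 - t ^ (2 * (min y w - z))) := by
  unfold kerK
  rw [mul_sub, mul_sub, ← pow_add, ← pow_add, ← pow_add, mul_one]
  rcases le_total y z with h1 | h1
  · have e1 : w - z + (max y z - min y z) = max y w - min y w := by grind
    have e2 : w - z + (y + z + 1) = y + w + 1 := by omega
    have e3 : max y w - min y w + 2 * (min y w - z) = max y w - min y w := by grind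
    rw [e1, e2, e3]; ring
  · have e2 : w - z + (y + z + 1) = y + w + 1 := by omega
    have e3 : max y w - min y w + 2 * (min y w - z) = w - z + (max y z - min y z) := by grind
    rw [e2, e3]; ring

lemma det_kerK (t : A) (m : ℕ) : ∀ (y z : ℕ → ℕ) (_ : ∀ i j, i < j → j < m + 1 → y i < y j)
    (_ : ∀ i j, i < j → j < m + 1 → z i < z j),
    (Matrix.of fun i j : Fin (m + 1) => kerK t (y i) (z j)).det =
      ∏ i ∈ range (m + 1), t ^ (max (y i) (z i) - min (y i) (z i)) * (1 - t ^ gapE y z i) := by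
  induction m with
  | zero =>
    intro y z _ _
    simp [gapE, kerK, mul_sub, ← pow_add]
    congr 1; grind
  | succ m ih =>
    have key : ∀ (y z : ℕ → ℕ) (_ : ∀ i j, i < j → j < m + 2 → y i < y j)
      (_ : ∀ i j, i < j → j < m + 2 → z i < z j), y m ≤ z m →
      (Matrix.of fun i j : Fin (m + 2) => kerK t (y i) (z j)).det =
      ∏ i ∈ range (m + 2), t ^ (max (y i) (z i) - min (y i) (z i)) * (1 - t ^ gapE y z i) := by
      intro y z hy hz hyz
      set M := (Matrix.of fun i j : Fin (m + 2) => kerK t (y i) (z j)) with hM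
      have hne : Fin.last (m+1) ≠ (Fin.last m).castSucc := by
        intro h; have := congrArg Fin.val h; simp at this
      have h1 := Matrix.det_updateCol_add_smul_self M hne (-t ^ (z (m+1) - z m))
      rw [← h1, Matrix.det_succ_column _ (Fin.last (m+1)), Fin.sum_univ_castSucc]
      rw [Finset.sum_eq_zero]
      · rw [prod_range_succ, ← ih y z (fun i j h h' => hy i j h (by omega)) (fun i j h h' => hz i j h (by omega))]
        have hzm := hz m (m+1) (by omega) (by omega)
        have hym := hy m (m+1) (by omega) (by omega)
        have h2 := kerK_last t (y (m+1)) (z m) (z (m+1)) hzm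
        have hmax : max (y m) (z m) = z m := max_eq_right hyz
        simp only [gapE, hmax, ← h2]
        simp [hM, ← two_mul]
        rw [mul_comm, ← sub_eq_add_neg]
        congr 2
        ext i j
        have : Fin.castSucc j ≠ Fin.last (m+1) := Fin.castSucc_lt_last j |>.ne
        simp [Matrix.updateCol_apply, this]
      · intro i _
        have hzm := hz m (m+1) (by omega) (by omega)
        have hi : y i ≤ y m := by
          rcases (Nat.lt_succ_iff_lt_or_eq.1 i.2) with h | h
          · exact (hy i m h (by omega)).le
          · rw [h]
        have := kerK_mul t (y i) (z m) (z (m+1)) (by omega) hzm.le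
        simp [hM, this]
    intro y z hy hz
    rcases le_total (y m) (z m) with h | h
    · exact key y z hy hz h
    · have := key z y hz hy h
      rw [← Matrix.det_transpose]
      convert this using 2
      · ext i j; simp [kerK_symm]
      · rw [max_comm, min_comm, gapE_symm]
end

/-- extend a permutation of `Fin m` to one of `Fin (m+1)` fixing the last element. -/
def extPerm {m : ℕ} (τ : Equiv.Perm (Fin m)) : Equiv.Perm (Fin (m+1)) :=
  (finSuccEquivLast.symm).permCongr (Equiv.optionCongr τ)

lemma extPerm_last {m : ℕ} (τ : Equiv.Perm (Fin m)) : extPerm τ (Fin.last m) = Fin.last m := by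
  simp [extPerm, Equiv.permCongr_apply]

lemma extPerm_castSucc {m : ℕ} (τ : Equiv.Perm (Fin m)) (i : Fin m) :
    extPerm τ i.castSucc = (τ i).castSucc := by
  simp [extPerm, Equiv.permCongr_apply]

lemma sign_extPerm {m : ℕ} (τ : Equiv.Perm (Fin m)) :
    Equiv.Perm.sign (extPerm τ) = Equiv.Perm.sign τ := by
  simp [extPerm, Equiv.Perm.sign_permCongr, Equiv.optionCongr_sign]

lemma cyc_castSucc {m : ℕ} (k : Fin (m+1)) (i : Fin m) :
    (Fin.cycleIcc k (Fin.last m)) i.castSucc = k.succAbove i := by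
  rcases lt_or_ge i.castSucc k with h | h
  · rw [Fin.cycleIcc_of_lt h, Fin.succAbove_of_castSucc_lt _ _ h]
  · rw [Fin.cycleIcc_of_ge_of_lt h (Fin.castSucc_lt_last i), Fin.succAbove_of_le_castSucc _ _ h]
    simp

/-- parametrization of permutations -/
def decPerm {m : ℕ} (p : Fin (m+1) × Equiv.Perm (Fin m)) : Equiv.Perm (Fin (m+1)) :=
  (Fin.cycleIcc p.1 (Fin.last m) * extPerm (p.2)⁻¹)⁻¹

lemma decPerm_inv_last {m : ℕ} (p : Fin (m+1) × Equiv.Perm (Fin m)) :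
    (decPerm p)⁻¹ (Fin.last m) = p.1 := by
  simp [decPerm, extPerm_last, Fin.cycleIcc_of_last (Fin.le_last _)]

lemma decPerm_inv_castSucc {m : ℕ} (p : Fin (m+1) × Equiv.Perm (Fin m)) (i : Fin m) :
    (decPerm p)⁻¹ i.castSucc = p.1.succAbove (p.2⁻¹ i) := by
  rw [decPerm, inv_inv, Equiv.Perm.mul_apply, extPerm_castSucc, cyc_castSucc]

lemma sign_decPerm {m : ℕ} (p : Fin (m+1) × Equiv.Perm (Fin m)) :
    (Equiv.Perm.sign (decPerm p) : ℤ) = (-1) ^ (m - (p.1 : ℕ)) * Equiv.Perm.sign p.2 := by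
  rw [decPerm, Equiv.Perm.sign_inv, Equiv.Perm.sign_mul, sign_extPerm, Equiv.Perm.sign_inv,
    Fin.sign_cycleIcc_of_le (Fin.le_last _)]
  simp

lemma decPerm_bij {m : ℕ} : Function.Bijective (decPerm (m := m)) := by
  rw [Fintype.bijective_iff_injective_and_card]
  constructor
  · rintro ⟨k, τ⟩ ⟨k', τ'⟩ h
    have h1 : k = k' := by
      have := decPerm_inv_last (k, τ); rw [h, decPerm_inv_last] at this; exact this.symm
    subst h1
    have h2 : τ⁻¹ = τ'⁻¹ := by
      ext1 i
      have := decPerm_inv_castSucc (k, τ) i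
      rw [h, decPerm_inv_castSucc] at this
      exact (Fin.succAbove_right_injective this).symm
    rw [inv_inj.1 h2]
  · simp [Fintype.card_perm, Nat.factorial_succ]

lemma sum_signed {m : ℕ} {M : Type*} [AddCommGroup M] (G : (Fin (m+1) → ℚ) → M) (x : Fin (m+1) → ℚ) :
    ∑ σ : Equiv.Perm (Fin (m+1)), ∑ ε : Fin (m+1) → Bool, wDet σ ε • G (wAct σ ε x) =
    ∑ k : Fin (m+1), ∑ b : Bool, ((-1 : ℤ)^(m - (k : ℕ)) * (if b then -1 else 1)) •
      ∑ τ : Equiv.Perm (Fin m), ∑ ε : Fin m → Bool, wDet τ ε •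
        G (Fin.snoc (α := fun _ => ℚ) (wAct τ ε (fun i => x (k.succAbove i))) ((if b then -1 else 1) * x k)) := by
  rw [← decPerm_bij.sum_comp (fun σ => ∑ ε : Fin (m+1) → Bool, wDet σ ε • G (wAct σ ε x)), Fintype.sum_prod_type]
  refine sum_congr rfl fun k _ => ?_
  simp only [smul_sum, smul_smul]
  conv_rhs => rw [sum_comm]
  refine sum_congr rfl fun τ _ => ?_
  rw [← (Fin.insertNthEquiv (fun _ => Bool) (Fin.last m)).sum_comp, Fintype.sum_prod_type]
  refine sum_congr rfl fun b _ => ?_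
  refine sum_congr rfl fun ε _ => ?_
  congr 1
  · simp only [wDet, sign_decPerm, Fin.insertNthEquiv_apply, Fin.prod_univ_castSucc,
      Fin.insertNth_last', Fin.snoc_castSucc, Fin.snoc_last]
    ring
  · congr 1
    funext i
    refine Fin.lastCases ?_ (fun i => ?_) i
    · simp only [wAct, decPerm_inv_last]
      simp
    · simp only [wAct, decPerm_inv_castSucc]
      simp [wAct]

lemma card_reindex {ι κ : Type*} [Fintype ι] [Fintype κ] {n : ℕ} (e : ι ≃ κ) (r : κ → Fin n → ℚ)
    (k : ℕ) (β : Fin n → ℚ) :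
    Nat.card {m : κ → ℕ // (∑ α, m α) = k ∧ (∑ α, (m α : ℚ) • r α) = β} =
    Nat.card {m : ι → ℕ // (∑ α, m α) = k ∧ (∑ α, (m α : ℚ) • r (e α)) = β} := by
  refine Nat.card_congr (Equiv.subtypeEquiv (Equiv.arrowCongr e (Equiv.refl ℕ)).symm ?_)
  intro m
  have h1 : ∑ α, m (e α) = ∑ α, m α := Equiv.sum_comp e m
  have h2 : ∑ α, (m (e α) : ℚ) • r (e α) = ∑ α, (m α : ℚ) • r α :=
    Equiv.sum_comp e (fun α => (m α : ℚ) • r α)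
  simp [h1, h2]

lemma finite_fam {ι : Type*} [Fintype ι] {n : ℕ} (r : ι → Fin n → ℚ) (k : ℕ) (β : Fin n → ℚ) :
    Finite {m : ι → ℕ // (∑ α, m α) = k ∧ (∑ α, (m α : ℚ) • r α) = β} := by
  classical
  refine Set.Finite.to_subtype (s := {m : ι → ℕ | (∑ α, m α) = k ∧ (∑ α, (m α : ℚ) • r α) = β}) ?_
  refine Set.Finite.subset (Finset.finite_toSet (piAntidiag (univ : Finset ι) k)) ?_
  intro m hm
  simp [hm.1]

lemma mem_rootsB {n : ℕ} (α : Fin n → ℚ) : α ∈ rootsB n ↔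
    (∃ i j : Fin n, j < i ∧ Pi.single i (1:ℚ) - Pi.single j 1 = α) ∨
    (∃ i j : Fin n, j < i ∧ Pi.single i (1:ℚ) + Pi.single j 1 = α) ∨
    (∃ i : Fin n, Pi.single i (1:ℚ) = α) := by
  simp [rootsB, rootsD]

/-- index type of roots involving the last coordinate -/
abbrev CIdx (m : ℕ) := Fin m ⊕ Fin m ⊕ Unit

/-- the roots involving the last coordinate, restricted -/
def cRoot (m : ℕ) : CIdx m → Fin m → ℚ
  | Sum.inl i => Pi.single i 1
  | Sum.inr (Sum.inl i) => -Pi.single i 1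
  | Sum.inr (Sum.inr _) => 0

/-- all roots of `B_{m+1}` -/
def allRoot (m : ℕ) : {α // α ∈ rootsB m} ⊕ CIdx m → Fin (m+1) → ℚ
  | Sum.inl α => Fin.snoc (α := fun _ => ℚ) α.1 0
  | Sum.inr c => Fin.snoc (α := fun _ => ℚ) (cRoot m c) 1

lemma single_castSucc {m : ℕ} (i : Fin m) : (Pi.single i.castSucc (1:ℚ) : Fin (m+1) → ℚ) =
    Fin.snoc (α := fun _ => ℚ) (Pi.single i 1) 0 := by
  funext j
  refine Fin.lastCases ?_ (fun j => ?_) j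
  · simp [Pi.single_apply, (Fin.castSucc_lt_last i).ne']
  · simp [Pi.single_apply]

lemma single_last {m : ℕ} : (Pi.single (Fin.last m) (1:ℚ) : Fin (m+1) → ℚ) =
    Fin.snoc (α := fun _ => ℚ) 0 1 := by
  funext j
  refine Fin.lastCases ?_ (fun j => ?_) j
  · simp
  · simp [Pi.single_apply, (Fin.castSucc_lt_last j).ne]

lemma snoc_add' {m : ℕ} (a b : Fin m → ℚ) (x y : ℚ) :
    (Fin.snoc (α := fun _ => ℚ) a x : Fin (m+1) → ℚ) + Fin.snoc (α := fun _ => ℚ) b y =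
      Fin.snoc (α := fun _ => ℚ) (a + b) (x + y) := by
  funext j
  refine Fin.lastCases ?_ (fun j => ?_) j <;> simp

lemma snoc_sub' {m : ℕ} (a b : Fin m → ℚ) (x y : ℚ) :
    (Fin.snoc (α := fun _ => ℚ) a x : Fin (m+1) → ℚ) - Fin.snoc (α := fun _ => ℚ) b y =
      Fin.snoc (α := fun _ => ℚ) (a - b) (x - y) := by
  funext j
  refine Fin.lastCases ?_ (fun j => ?_) j <;> simp

lemma cRoot_inj (m : ℕ) : Function.Injective (cRoot m) := by
  have h0 : ∀ i : Fin m, (Pi.single i (1:ℚ) : Fin m → ℚ) ≠ 0 := by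
    intro i h; have := congrFun h i; simp at this
  have h1 : ∀ i j : Fin m, (Pi.single i (1:ℚ) : Fin m → ℚ) ≠ - Pi.single j 1 := by
    intro i j h; have := congrFun h i; simp [Pi.single_apply] at this
    split_ifs at this <;> norm_num at this
  have h2 : ∀ i j : Fin m, (Pi.single i (1:ℚ) : Fin m → ℚ) = Pi.single j 1 → i = j := by
    intro i j h; have := congrFun h i; simp [Pi.single_apply] at this
    exact this
  rintro (i | i | i) (j | j | j) h <;> simp only [cRoot] at h
  · rw [h2 i j h]
  · exact absurd h (h1 i j)
  · exact absurd h (h0 i)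
  · exact absurd h.symm (h1 j i)
  · rw [h2 i j (neg_injective h)]
  · exact absurd (neg_eq_zero.1 h) (h0 i)
  · exact absurd h.symm (h0 j)
  · exact absurd (neg_eq_zero.1 h.symm) (h0 j)
  · rfl

lemma allRoot_inj (m : ℕ) : Function.Injective (allRoot m) := by
  rintro (i | i) (j | j) h <;> simp only [allRoot] at h
  · rw [Fin.snoc_inj] at h
    rw [Subtype.ext h.1]
  · rw [Fin.snoc_inj] at h
    exact absurd h.2 (by norm_num)
  · rw [Fin.snoc_inj] at h
    exact absurd h.2 (by norm_num)
  · rw [Fin.snoc_inj] at h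
    rw [cRoot_inj m h.1]

lemma allRoot_range (m : ℕ) (α : Fin (m+1) → ℚ) : α ∈ rootsB (m+1) ↔ ∃ x, allRoot m x = α := by
  constructor
  · rw [mem_rootsB]
    rintro (⟨i, j, hij, rfl⟩ | ⟨i, j, hij, rfl⟩ | ⟨i, rfl⟩)
    · induction j using Fin.lastCases with
      | last => exact absurd hij (not_lt.2 (Fin.le_last i))
      | cast j =>
        induction i using Fin.lastCases with
        | last =>
          refine ⟨Sum.inr (Sum.inr (Sum.inl j)), ?_⟩
          rw [single_last, single_castSucc, snoc_sub']; simp [allRoot, cRoot]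
        | cast i =>
          refine ⟨Sum.inl ⟨Pi.single i 1 - Pi.single j 1, ?_⟩, ?_⟩
          · rw [mem_rootsB]; exact Or.inl ⟨i, j, by simpa using hij, rfl⟩
          · rw [single_castSucc, single_castSucc, snoc_sub']; simp [allRoot]
    · induction j using Fin.lastCases with
      | last => exact absurd hij (not_lt.2 (Fin.le_last i))
      | cast j =>
        induction i using Fin.lastCases with
        | last =>
          refine ⟨Sum.inr (Sum.inl j), ?_⟩
          rw [single_last, single_castSucc, snoc_add']; simp [allRoot, cRoot]
        | cast i =>
          refine ⟨Sum.inl ⟨Pi.single i 1 + Pi.single j 1, ?_⟩, ?_⟩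
          · rw [mem_rootsB]; exact Or.inr (Or.inl ⟨i, j, by simpa using hij, rfl⟩)
          · rw [single_castSucc, single_castSucc, snoc_add']; simp [allRoot]
    · induction i using Fin.lastCases with
      | last => exact ⟨Sum.inr (Sum.inr (Sum.inr ())), by rw [single_last]; simp [allRoot, cRoot]⟩
      | cast i =>
        refine ⟨Sum.inl ⟨Pi.single i 1, ?_⟩, ?_⟩
        · rw [mem_rootsB]; exact Or.inr (Or.inr ⟨i, rfl⟩)
        · rw [single_castSucc]; simp [allRoot]
  · rintro ⟨(⟨α, hα⟩ | i | i | i), rfl⟩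
    · rw [mem_rootsB] at hα ⊢
      rcases hα with (⟨i, j, hij, rfl⟩ | ⟨i, j, hij, rfl⟩ | ⟨i, rfl⟩)
      · refine Or.inl ⟨i.castSucc, j.castSucc, by simpa using hij, ?_⟩
        rw [single_castSucc, single_castSucc, snoc_sub']; simp [allRoot]
      · refine Or.inr (Or.inl ⟨i.castSucc, j.castSucc, by simpa using hij, ?_⟩)
        rw [single_castSucc, single_castSucc, snoc_add']; simp [allRoot]
      · refine Or.inr (Or.inr ⟨i.castSucc, ?_⟩)
        rw [single_castSucc]; simp [allRoot]
    · rw [mem_rootsB]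
      refine Or.inr (Or.inl ⟨Fin.last m, i.castSucc, Fin.castSucc_lt_last i, ?_⟩)
      rw [single_last, single_castSucc, snoc_add']; simp [allRoot, cRoot]
    · rw [mem_rootsB]
      refine Or.inl ⟨Fin.last m, i.castSucc, Fin.castSucc_lt_last i, ?_⟩
      rw [single_last, single_castSucc, snoc_sub']; simp [allRoot, cRoot]
    · rw [mem_rootsB]
      refine Or.inr (Or.inr ⟨Fin.last m, ?_⟩)
      rw [single_last]; simp [allRoot, cRoot]

/-- the roots of `B_{m+1}` as a sum type -/
noncomputable def allRootEquiv (m : ℕ) : {α // α ∈ rootsB m} ⊕ CIdx m ≃ {α // α ∈ rootsB (m+1)} :=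
  Equiv.ofBijective (fun x => ⟨allRoot m x, (allRoot_range m _).2 ⟨x, rfl⟩⟩)
    ⟨fun x y h => allRoot_inj m (congrArg Subtype.val h), fun ⟨α, hα⟩ => by
      obtain ⟨x, hx⟩ := (allRoot_range m α).1 hα
      exact ⟨x, Subtype.ext hx⟩⟩

lemma coeff_kostantQ_succ (m : ℕ) (β : Fin (m+1) → ℚ) (k : ℕ) :
    PowerSeries.coeff k (kostantQ (rootsB (m+1)) β) =
    (Nat.card {x : {α // α ∈ rootsB m} ⊕ CIdx m → ℕ //
      (∑ α, x α) = k ∧ (∑ α, (x α : ℚ) • allRoot m α) = β} : ℤ) := by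
  rw [kostantQ, PowerSeries.coeff_mk,
    card_reindex (allRootEquiv m) (fun α => (α : Fin (m+1) → ℚ))]
  rfl

lemma sum_allRoot (m : ℕ) (x : {α // α ∈ rootsB m} ⊕ CIdx m → ℕ) :
    (∑ α, (x α : ℚ) • allRoot m α) = Fin.snoc (α := fun _ => ℚ)
      ((∑ α, (x (Sum.inl α) : ℚ) • α.1) + ∑ c, (x (Sum.inr c) : ℚ) • cRoot m c)
      ((∑ c, x (Sum.inr c) : ℕ) : ℚ) := by
  rw [Fintype.sum_sum_type]
  funext j
  refine Fin.lastCases ?_ (fun j => ?_) j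
  · simp only [Pi.add_apply, Finset.sum_apply, Pi.smul_apply, allRoot, Fin.snoc_last]; simp
  · simp only [Pi.add_apply, Finset.sum_apply, Pi.smul_apply, allRoot, Fin.snoc_castSucc]

lemma kostantQ_eq_zero (m : ℕ) (β : Fin (m+1) → ℚ) (h : ∀ R : ℕ, β (Fin.last m) ≠ R) :
    kostantQ (rootsB (m+1)) β = 0 := by
  ext k
  rw [coeff_kostantQ_succ, map_zero, Nat.cast_eq_zero, Nat.card_eq_zero]
  left
  refine ⟨fun ⟨x, _, hx⟩ => h (∑ c, x (Sum.inr c)) ?_⟩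
  rw [← hx, sum_allRoot, Fin.snoc_last]

lemma kostantQ_succ (m : ℕ) (b : Fin m → ℚ) (R : ℕ) :
    kostantQ (rootsB (m+1)) (Fin.snoc (α := fun _ => ℚ) b (R : ℚ)) =
      PowerSeries.X ^ R * ∑ c ∈ piAntidiag (univ : Finset (CIdx m)) R,
        kostantQ (rootsB m) (b - ∑ i, (c i : ℚ) • cRoot m i) := by
  ext k
  rw [coeff_kostantQ_succ, PowerSeries.coeff_X_pow_mul', map_sum]
  simp only [sum_allRoot, Fin.snoc_inj]
  split_ifs with hk
  · simp only [kostantQ, PowerSeries.coeff_mk]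
    rw [← Nat.cast_sum, Nat.cast_inj, ← Finset.sum_coe_sort]
    have := fun c : piAntidiag (univ : Finset (CIdx m)) R => finite_fam
      (fun α : {α // α ∈ rootsB m} => α.1) (k - R) (b - ∑ i, (c.1 i : ℚ) • cRoot m i)
    rw [← Nat.card_sigma]
    refine Nat.card_congr ?_
    refine
      { toFun := fun x => ⟨⟨fun c => x.1 (Sum.inr c), ?_⟩, ⟨fun a => x.1 (Sum.inl a), ?_, ?_⟩⟩
        invFun := fun y => ⟨Sum.elim y.2.1 y.1.1, ?_, ?_, ?_⟩
        left_inv := ?_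
        right_inv := ?_ }
    · have := x.2.2.2
      simp only [Nat.cast_inj] at this
      simp [this]
    · have h1 := x.2.1
      have h2 := x.2.2.2
      rw [Nat.cast_inj] at h2
      rw [Fintype.sum_sum_type, h2] at h1
      exact Nat.eq_sub_of_add_eq h1
    · exact eq_sub_of_add_eq x.2.2.1
    · have h1 := y.1.2
      have h2 := y.2.2.1
      simp only [mem_piAntidiag] at h1
      rw [Fintype.sum_sum_type]
      simp only [Sum.elim_inl, Sum.elim_inr, h1.1, h2]
      omega
    · have h2 := y.2.2.2
      simp only [Sum.elim_inl, Sum.elim_inr, h2]; simp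
    · have h1 := y.1.2
      simp only [mem_piAntidiag] at h1
      simp only [Sum.elim_inr, h1.1]
    · intro x; ext (a | a) <;> simp
    · intro y; rfl
  · rw [Nat.cast_eq_zero, Nat.card_eq_zero]
    left
    refine ⟨fun ⟨x, h1, h2, h3⟩ => hk ?_⟩
    rw [Nat.cast_inj] at h3
    rw [Fintype.sum_sum_type, h3] at h1
    omega

/-- the series `1/(1-X^2)` -/
noncomputable def serV : PowerSeries ℤ := PowerSeries.mk fun s => if Even s then 1 else 0

/-- the series `1/(1-X)` -/
noncomputable def serU : PowerSeries ℤ := PowerSeries.mk fun _ => 1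

lemma serU_mul : serU * (1 - PowerSeries.X) = 1 := PowerSeries.mk_one_mul_one_sub_eq_one ℤ

lemma serV_mul : serV * (1 - PowerSeries.X ^ 2) = 1 := by
  ext k
  rw [mul_sub, mul_one, map_sub, PowerSeries.coeff_mul_X_pow', PowerSeries.coeff_one]
  simp only [serV, PowerSeries.coeff_mk]
  rcases k with _ | _ | k
  · simp
  · simp
  · simp [Nat.even_add]

/-- integer weight of a family -/
def wtc {m : ℕ} (c : CIdx m → ℕ) : Fin m → ℤ :=
  fun i => (c (Sum.inl i) : ℤ) - (c (Sum.inr (Sum.inl i)) : ℤ)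

lemma sum_cRoot {m : ℕ} (c : CIdx m → ℕ) :
    (∑ i, (c i : ℚ) • cRoot m i) = fun i => (wtc c i : ℚ) := by
  funext i
  simp [Fintype.sum_sum_type, cRoot, wtc, Finset.sum_apply, Pi.single_apply, sub_eq_add_neg]

lemma coeff_V_X (a s : ℕ) : PowerSeries.coeff s (serV * PowerSeries.X ^ a) =
    if (a ≤ s ∧ Even (s - a)) then 1 else 0 := by
  rw [PowerSeries.coeff_mul_X_pow']
  simp only [serV, PowerSeries.coeff_mk, ite_and]

lemma card_wtc {m : ℕ} (R : ℕ) (d : Fin m → ℤ) :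
    (((piAntidiag (univ : Finset (CIdx m)) R).filter (fun c => wtc c = d)).card : ℤ) =
      PowerSeries.coeff R (serU * serV ^ m * PowerSeries.X ^ (∑ i, (d i).natAbs)) := by
  have h1 : serU * serV ^ m * PowerSeries.X ^ (∑ i, (d i).natAbs) =
      ∏ x : Option (Fin m), (match x with
        | none => serU
        | some i => serV * PowerSeries.X ^ (d i).natAbs) := by
    rw [Fintype.prod_option]
    simp only [prod_mul_distrib, prod_pow_eq_pow_sum, prod_const, card_univ, Fintype.card_fin]
    ring
  rw [h1, PowerSeries.coeff_prod]
  have h2 : ∀ l : Option (Fin m) →₀ ℕ, (∏ x : Option (Fin m), PowerSeries.coeff (l x) (match x with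
        | none => serU
        | some i => serV * PowerSeries.X ^ (d i).natAbs)) =
      if (∀ i : Fin m, (d i).natAbs ≤ l (some i) ∧ Even (l (some i) - (d i).natAbs)) then (1:ℤ) else 0 := by
    intro l
    rw [Fintype.prod_option]
    simp only [coeff_V_X]
    rw [Finset.prod_ite_zero]
    simp [serU]
  rw [sum_congr rfl (fun l _ => h2 l), sum_boole, Nat.cast_inj]
  refine card_nbij'
    (fun c => Finsupp.equivFunOnFinite.symm (fun x => match x with
      | none => c (Sum.inr (Sum.inr ()))
      | some i => c (Sum.inl i) + c (Sum.inr (Sum.inl i))))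
    (fun l x => match x with
      | Sum.inl i => (((l (some i) : ℤ) + d i) / 2).toNat
      | Sum.inr (Sum.inl i) => (((l (some i) : ℤ) - d i) / 2).toNat
      | Sum.inr (Sum.inr _) => l none) ?_ ?_ ?_ ?_
  · intro c hc
    simp only [coe_filter, mem_piAntidiag, Set.mem_ofPred_eq] at hc
    obtain ⟨⟨h, -⟩, rfl⟩ := hc
    simp only [coe_filter, mem_finsuppAntidiag, Set.mem_ofPred_eq]
    refine ⟨⟨?_, by simp⟩, ?_⟩
    · rw [← h, Fintype.sum_option]
      simp [Fintype.sum_sum_type, sum_add_distrib]; ring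
    · intro i
      simp only [Finsupp.equivFunOnFinite_symm_apply_apply, wtc, Nat.even_iff]
      omega
  · intro l hl
    simp only [coe_filter, mem_finsuppAntidiag, Set.mem_ofPred_eq] at hl
    obtain ⟨⟨h, -⟩, h2⟩ := hl
    simp only [coe_filter, mem_piAntidiag, Set.mem_ofPred_eq]
    rw [Fintype.sum_option] at h
    refine ⟨⟨?_, by simp⟩, ?_⟩
    · rw [← h, Fintype.sum_sum_type, Fintype.sum_sum_type, ← add_assoc, ← sum_add_distrib, add_comm (l none)]
      congr 1
      · refine sum_congr rfl fun i _ => ?_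
        have := h2 i
        rw [Nat.even_iff] at this
        dsimp only
        omega
    · funext i
      have := h2 i
      rw [Nat.even_iff] at this
      simp only [wtc]
      omega
  · intro c hc
    simp only [coe_filter, mem_piAntidiag, Set.mem_ofPred_eq] at hc
    obtain ⟨⟨h, -⟩, rfl⟩ := hc
    funext x
    rcases x with i | i | i
    · simp [wtc]; omega
    · simp [wtc]; omega
    · simp
  · intro l hl
    simp only [coe_filter, mem_finsuppAntidiag, Set.mem_ofPred_eq] at hl
    obtain ⟨⟨h, -⟩, h2⟩ := hl
    ext x
    rcases x with _ | i
    · simp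
    · have := h2 i
      rw [Nat.even_iff] at this
      simp only [Finsupp.equivFunOnFinite_symm_apply_apply]
      omega

/-- multiplicity -/
noncomputable def mulN (m R : ℕ) (d : Fin m → ℤ) : ℤ :=
  PowerSeries.coeff R (serU * serV ^ m * PowerSeries.X ^ (∑ i, (d i).natAbs))

lemma mulN_eq_zero {m R : ℕ} (d : Fin m → ℤ) (h : R < ∑ i, (d i).natAbs) : mulN m R d = 0 := by
  rw [mulN, PowerSeries.coeff_mul_X_pow', if_neg (by omega)]

lemma natAbs_wtc_le {m R : ℕ} {c : CIdx m → ℕ} (h : c ∈ piAntidiag (univ : Finset (CIdx m)) R)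
    (i : Fin m) : (wtc c i).natAbs ≤ R := by
  simp only [mem_piAntidiag] at h
  have h1 := h.1
  rw [Fintype.sum_sum_type, Fintype.sum_sum_type, ← add_assoc, ← sum_add_distrib] at h1
  have := Finset.single_le_sum (f := fun i => c (Sum.inl i) + c (Sum.inr (Sum.inl i)))
    (fun _ _ => Nat.zero_le _) (mem_univ i)
  simp only [wtc]
  omega

lemma sum_wtc {m : ℕ} {M : Type*} [AddCommGroup M] (R : ℕ) (S : Finset (Fin m → ℤ))
    (hS : ∀ d : Fin m → ℤ, (∀ i, (d i).natAbs ≤ R) → d ∈ S) (G : (Fin m → ℤ) → M) :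
    ∑ c ∈ piAntidiag (univ : Finset (CIdx m)) R, G (wtc c) = ∑ d ∈ S, mulN m R d • G d := by
  rw [← sum_fiberwise_of_maps_to (t := S) (g := wtc) (fun c hc => hS _ (natAbs_wtc_le hc))]
  refine sum_congr rfl fun d _ => ?_
  rw [mulN, ← card_wtc, natCast_zsmul, ← sum_const]
  refine sum_congr rfl fun c hc => ?_
  rw [(mem_filter.1 hc).2]

/-- shift by one half -/
def half {m : ℕ} (z : Fin m → ℤ) : Fin m → ℚ := fun i => (z i : ℚ) + 1/2

/-- action on shifted coordinates -/
def zAct {m : ℕ} (τ : Equiv.Perm (Fin m)) (ε : Fin m → Bool) (z : Fin m → ℤ) : Fin m → ℤ :=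
  fun i => if ε i then -1 - z (τ⁻¹ i) else z (τ⁻¹ i)

lemma wAct_half {m : ℕ} (τ : Equiv.Perm (Fin m)) (ε : Fin m → Bool) (z : Fin m → ℤ) :
    wAct τ ε (half z) = half (zAct τ ε z) := by
  funext i
  simp only [wAct, half, zAct]
  split_ifs <;> push_cast <;> ring

/-- alternating sum -/
noncomputable def altF {m : ℕ} (c β : Fin m → ℚ) : PowerSeries ℤ :=
  ∑ σ : Equiv.Perm (Fin m), ∑ ε : Fin m → Bool,
    wDet σ ε • kostantQ (rootsB m) (wAct σ ε β - c)

lemma wDet_sq {m : ℕ} (τ : Equiv.Perm (Fin m)) (ε : Fin m → Bool) : wDet τ ε * wDet τ ε = 1 := by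
  unfold wDet
  rw [mul_mul_mul_comm, ← prod_mul_distrib]
  have : ∀ i, ((if ε i = true then (-1:ℤ) else 1) * if ε i = true then -1 else 1) = 1 := by
    intro i; split_ifs <;> norm_num
  simp [this, ← Units.val_mul]

lemma altF_wAct {m : ℕ} (c β : Fin m → ℚ) (τ₀ : Equiv.Perm (Fin m)) (ε₀ : Fin m → Bool) :
    altF c (wAct τ₀ ε₀ β) = wDet τ₀ ε₀ • altF c β := by
  unfold altF
  conv_rhs => rw [← Equiv.sum_comp (Equiv.mulRight τ₀)]
  rw [smul_sum]
  refine sum_congr rfl fun τ _ => ?_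
  have hinv : Function.Involutive (fun (ε : Fin m → Bool) (i : Fin m) => xor (ε i) (ε₀ (τ⁻¹ i))) := by
    intro ε; funext i; simp
  conv_rhs => rw [← Equiv.sum_comp (hinv.toPerm _)]
  rw [smul_sum]
  refine sum_congr rfl fun ε _ => ?_
  have h1 : wAct τ ε (wAct τ₀ ε₀ β) = wAct (τ * τ₀) (fun i => xor (ε i) (ε₀ (τ⁻¹ i))) β := by
    funext i
    simp only [wAct, mul_inv_rev, Equiv.Perm.mul_apply]
    have hb : ∀ (a b : Bool) (x : ℚ), (if a = true then (-1:ℚ) else 1) *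
        ((if b = true then -1 else 1) * x) = (if (xor a b) = true then -1 else 1) * x := by
      intro a b x; cases a <;> cases b <;> simp
    exact hb _ _ _
  have h2 : wDet (τ * τ₀) (fun i => xor (ε i) (ε₀ (τ⁻¹ i))) = wDet τ ε * wDet τ₀ ε₀ := by
    unfold wDet
    have : ∀ i, (if (xor (ε i) (ε₀ (τ⁻¹ i))) = true then (-1:ℤ) else 1) =
      (if ε i = true then -1 else 1) * (if ε₀ (τ⁻¹ i) = true then -1 else 1) := by
      intro i; cases ε i <;> cases ε₀ (τ⁻¹ i) <;> simp
    simp only [this, prod_mul_distrib]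
    rw [Equiv.prod_comp (τ⁻¹) (fun i => if ε₀ i = true then (-1:ℤ) else 1), Equiv.Perm.sign_mul]
    push_cast; ring
  simp only [Function.Involutive.coe_toPerm, Equiv.coe_mulRight]
  rw [h1, h2, smul_smul, mul_comm (wDet τ₀ ε₀), mul_assoc, wDet_sq, mul_one]

lemma core1 {m : ℕ} (c₀ : Fin m → ℚ) (y : Fin m → ℤ) (R : ℕ) :
    ∑ τ : Equiv.Perm (Fin m), ∑ ε : Fin m → Bool, wDet τ ε •
      ∑ c ∈ piAntidiag (univ : Finset (CIdx m)) R,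
        kostantQ (rootsB m) (wAct τ ε (half y) - c₀ - ∑ i, (c i : ℚ) • cRoot m i) =
    ∑ d ∈ Fintype.piFinset (fun _ : Fin m => Icc (-(R:ℤ)) R),
      mulN m R d • altF c₀ (half (y + d)) := by
  have h1 : ∀ (τ : Equiv.Perm (Fin m)) (ε : Fin m → Bool),
      ∑ c ∈ piAntidiag (univ : Finset (CIdx m)) R,
        kostantQ (rootsB m) (wAct τ ε (half y) - c₀ - ∑ i, (c i : ℚ) • cRoot m i) =
      ∑ d ∈ Fintype.piFinset (fun _ : Fin m => Icc (-(R:ℤ)) R),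
        mulN m R d • kostantQ (rootsB m) (wAct τ ε (half (y + d)) - c₀) := by
    intro τ ε
    simp only [sum_cRoot]
    rw [sum_wtc R (Fintype.piFinset (fun _ : Fin m => Icc (-(R:ℤ)) R)) (fun d hd => by
      simp only [Fintype.mem_piFinset, mem_Icc]
      intro i; have := hd i; omega)
      (fun d => kostantQ (rootsB m) (wAct τ ε (half y) - c₀ - fun i => (d i : ℚ)))]
    refine sum_nbij' (fun d j => if ε (τ j) then d (τ j) else - d (τ j))
      (fun d i => if ε i then d (τ⁻¹ i) else - d (τ⁻¹ i)) ?_ ?_ ?_ ?_ ?_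
    · intro d hd
      simp only [Fintype.mem_piFinset, mem_Icc] at hd ⊢
      intro i; have := hd (τ i); split_ifs <;> omega
    · intro d hd
      simp only [Fintype.mem_piFinset, mem_Icc] at hd ⊢
      intro i; have := hd (τ⁻¹ i); split_ifs <;> omega
    · intro d _; funext i; simp; split_ifs <;> simp
    · intro d _; funext i; simp; split_ifs <;> simp
    · intro d _
      congr 1
      · unfold mulN
        congr 3
        rw [← Equiv.sum_comp τ]
        refine sum_congr rfl fun i _ => ?_
        dsimp only
        split_ifs <;> simp
      · congr 1
        funext i
        have hti : τ (τ⁻¹ i) = i := Equiv.apply_symm_apply τ i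
        simp only [Pi.sub_apply, wAct, half, Pi.add_apply, hti]
        split_ifs <;> push_cast <;> ring
  simp only [h1, smul_sum]
  unfold altF
  simp only [smul_sum]
  rw [sum_comm' (t' := univ) (s' := fun _ => univ) (by simp)]
  rw [sum_comm]
  rw [sum_comm]
  conv_lhs => enter [2, x]; rw [sum_comm]
  rw [sum_comm]
  refine sum_congr rfl fun d _ => ?_
  rw [sum_comm]
  refine sum_congr rfl fun τ _ => ?_
  refine sum_congr rfl fun ε _ => ?_
  rw [smul_comm]

lemma zAct_inj {m : ℕ} {τ τ' : Equiv.Perm (Fin m)} {ε ε' : Fin m → Bool} {z z' : Fin m → ℤ}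
    (hz : StrictMono z) (hz' : StrictMono z') (h0 : ∀ i, 0 ≤ z i) (h0' : ∀ i, 0 ≤ z' i)
    (h : zAct τ ε z = zAct τ' ε' z') : τ = τ' ∧ ε = ε' ∧ z = z' := by
  have hε : ε = ε' := by
    funext i
    have := congrFun h i
    simp only [zAct] at this
    have h1 := h0 (τ⁻¹ i)
    have h2 := h0' (τ'⁻¹ i)
    rcases hb : ε i <;> rcases hb' : ε' i <;> simp [hb, hb'] at this <;> first | rfl | (exfalso; simp at h1 h2; omega)
  subst hε
  have hz2 : ∀ i, z (τ⁻¹ i) = z' (τ'⁻¹ i) := by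
    intro i
    have := congrFun h i
    simp only [zAct] at this
    split_ifs at this <;> omega
  have hz3 : ∀ j, z j = z' (τ'⁻¹ (τ j)) := by
    intro j; have := hz2 (τ j); simpa using this
  have hmono : StrictMono (τ'⁻¹ * τ) := by
    intro a b hab
    have := hz hab
    rw [hz3 a, hz3 b] at this
    exact hz'.lt_iff_lt.1 this
  have hid : τ'⁻¹ * τ = 1 := by
    ext1 i
    have := Subsingleton.elim (hmono.orderIsoOfSurjective _ (τ'⁻¹ * τ).surjective) (OrderIso.refl _)
    exact DFunLike.congr_fun this i
  refine ⟨(inv_mul_eq_one.1 hid).symm, rfl, ?_⟩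
  funext j
  have := hz3 j
  rw [← Equiv.Perm.mul_apply, hid] at this
  exact this

lemma zAct_surj {m : ℕ} (z : Fin m → ℤ)
    (hinj : Function.Injective (fun i => max (z i) (-1 - z i))) :
    ∃ (τ : Equiv.Perm (Fin m)) (ε : Fin m → Bool) (x : Fin m → ℤ), StrictMono x ∧
      (∀ i, ∃ j, x i = max (z j) (-1 - z j)) ∧ zAct τ ε x = z := by
  set a := (fun i => max (z i) (-1 - z i)) with ha
  refine ⟨Tuple.sort a, fun i => decide (z i < 0), a ∘ Tuple.sort a, ?_, ?_, ?_⟩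
  · exact (Tuple.monotone_sort a).strictMono_of_injective (hinj.comp (Tuple.sort a).injective)
  · intro i; exact ⟨Tuple.sort a i, rfl⟩
  · funext i
    simp [zAct, ha]
    split_ifs <;> omega

lemma altF_zero {m : ℕ} (c : Fin m → ℚ) (z : Fin m → ℤ)
    (hinj : ¬ Function.Injective (fun i => max (z i) (-1 - z i))) : altF c (half z) = 0 := by
  simp only [Function.Injective, not_forall] at hinj
  obtain ⟨i, j, hij, hne⟩ := hinj
  let ε : Fin m → Bool := fun k => decide ((k = i ∨ k = j) ∧ z i ≠ z j)
  have h1 : zAct (Equiv.swap i j) ε z = z := by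
    funext k
    simp only [zAct, ε, Equiv.swap_inv, Equiv.swap_apply_def, decide_eq_true_eq]
    by_cases hki : k = i
    · subst hki; simp; split_ifs <;> omega
    · by_cases hkj : k = j
      · subst hkj; simp [hki]; split_ifs <;> omega
      · simp [hki, hkj]
  have h2 : wDet (Equiv.swap i j) ε = -1 := by
    unfold wDet
    rw [Equiv.Perm.sign_swap hne]
    by_cases hz : z i = z j
    · simp [ε, hz]
    · have : ∀ k, (if ε k = true then (-1:ℤ) else 1) = (if k = i then -1 else 1) * (if k = j then -1 else 1) := by
        intro k
        simp only [ε]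
        by_cases hki : k = i
        · subst hki; simp [hne, hz]
        · simp [hki, hz]
      simp only [this, prod_mul_distrib, prod_ite_eq', mem_univ]
      simp
  have h3 := altF_wAct c (half z) (Equiv.swap i j) ε
  rw [wAct_half, h1, h2, neg_smul, one_smul] at h3
  ext k
  have h4 := congrArg (PowerSeries.coeff k) h3
  rw [map_neg] at h4
  rw [map_zero]
  omega

lemma orbit {m : ℕ} (c : Fin m → ℚ) (y : Fin m → ℤ) (R L : ℕ) (hy : ∀ i, 0 ≤ y i)
    (hL : ∀ i, y i + R ≤ L) :
    ∑ d ∈ Fintype.piFinset (fun _ : Fin m => Icc (-(R:ℤ)) R),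
      mulN m R d • altF c (half (y + d)) =
    ∑ z ∈ (Fintype.piFinset (fun _ : Fin m => Icc (0:ℤ) L)).filter StrictMono,
      (∑ τ : Equiv.Perm (Fin m), ∑ ε : Fin m → Bool, wDet τ ε * mulN m R (zAct τ ε z - y)) •
        altF c (half z) := by
  classical
  have h1 : ∑ d ∈ Fintype.piFinset (fun _ : Fin m => Icc (-(R:ℤ)) R),
      mulN m R d • altF c (half (y + d)) =
      ∑ z ∈ Fintype.piFinset (fun _ : Fin m => Icc (-1-(L:ℤ)) L),
        mulN m R (z - y) • altF c (half z) := by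
    refine sum_of_injOn (fun d => y + d) ?_ ?_ ?_ ?_
    · intro a _ b _ h; exact add_left_cancel h
    · intro d hd
      simp only [mem_coe, Fintype.mem_piFinset, mem_Icc, Pi.add_apply] at hd ⊢
      intro i; have := hd i; have := hL i; have := hy i; omega
    · intro z _ hz
      rw [mulN_eq_zero, zero_smul]
      by_contra hle
      refine hz ⟨z - y, ?_, by simp⟩
      simp only [mem_coe, Fintype.mem_piFinset, mem_Icc, Pi.sub_apply]
      intro i
      have := Finset.single_le_sum (f := fun i => ((z - y) i).natAbs)
        (fun _ _ => Nat.zero_le _) (mem_univ i)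
      simp only [Pi.sub_apply] at this hle
      omega
    · intro d _; simp
  rw [h1]
  symm
  have h2 : ∑ z ∈ (Fintype.piFinset (fun _ : Fin m => Icc (0:ℤ) L)).filter StrictMono,
      (∑ τ : Equiv.Perm (Fin m), ∑ ε : Fin m → Bool, wDet τ ε * mulN m R (zAct τ ε z - y)) •
        altF c (half z) =
      ∑ p ∈ ((Fintype.piFinset (fun _ : Fin m => Icc (0:ℤ) L)).filter StrictMono) ×ˢ
        (univ : Finset (Equiv.Perm (Fin m) × (Fin m → Bool))),
        mulN m R (zAct p.2.1 p.2.2 p.1 - y) • altF c (half (zAct p.2.1 p.2.2 p.1)) := by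
    rw [sum_product]
    refine sum_congr rfl fun z _ => ?_
    rw [← univ_product_univ, sum_product, sum_smul]
    refine sum_congr rfl fun τ _ => ?_
    rw [sum_smul]
    refine sum_congr rfl fun ε _ => ?_
    simp only
    rw [← wAct_half, altF_wAct, smul_smul, mul_comm]
  rw [h2]
  refine sum_of_injOn (fun p => zAct p.2.1 p.2.2 p.1) ?_ ?_ ?_ ?_
  · rintro ⟨z, τ, ε⟩ h ⟨z', τ', ε'⟩ h' heq
    simp only [coe_product, coe_filter, Fintype.mem_piFinset, mem_Icc, Set.mem_prod,
      Set.mem_ofPred_eq] at h h'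
    obtain ⟨a, b, c⟩ := zAct_inj h.1.2 h'.1.2 (fun i => (h.1.1 i).1) (fun i => (h'.1.1 i).1) heq
    subst a b c; rfl
  · rintro ⟨z, τ, ε⟩ h
    simp only [coe_product, coe_filter, Fintype.mem_piFinset, mem_Icc, Set.mem_prod,
      Set.mem_ofPred_eq] at h
    simp only [mem_coe, Fintype.mem_piFinset, mem_Icc]
    intro i
    have := h.1.1 (τ⁻¹ i)
    simp only [zAct]
    split_ifs <;> omega
  · intro z hz hn
    rw [altF_zero, smul_zero]
    intro hinj
    obtain ⟨τ, ε, x, hx, hx2, hx3⟩ := zAct_surj z hinj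
    refine hn ⟨(x, τ, ε), ?_, hx3⟩
    simp only [coe_product, coe_filter, Fintype.mem_piFinset, mem_Icc, Set.mem_prod,
      Set.mem_ofPred_eq, coe_univ, Set.mem_univ, and_true]
    refine ⟨fun i => ?_, hx⟩
    obtain ⟨j, hj⟩ := hx2 i
    simp only [Fintype.mem_piFinset, mem_Icc] at hz
    have := hz j
    omega
  · intro p _; rfl

lemma sum_wDet_eq_det {m : ℕ} (y z : Fin m → ℕ) :
    ∑ τ : Equiv.Perm (Fin m), ∑ ε : Fin m → Bool, (wDet τ ε : PowerSeries ℤ) *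
      PowerSeries.X ^ (∑ i, ((zAct τ ε (fun j => (z j : ℤ)) - fun j => (y j : ℤ)) i).natAbs) =
    (Matrix.of fun i j : Fin m => kerK (PowerSeries.X : PowerSeries ℤ) (y i) (z j)).det := by
  rw [Matrix.det_apply']
  refine sum_congr rfl fun τ _ => ?_
  have h1 : ∏ i, (Matrix.of fun i j : Fin m => kerK (PowerSeries.X : PowerSeries ℤ) (y i) (z j)) (τ i) i
      = ∏ i, kerK (PowerSeries.X : PowerSeries ℤ) (y i) (z (τ⁻¹ i)) := by
    rw [← Equiv.prod_comp τ (fun i => kerK (PowerSeries.X : PowerSeries ℤ) (y i) (z (τ⁻¹ i)))]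
    simp
  rw [h1]
  have h2 : ∀ i, kerK (PowerSeries.X : PowerSeries ℤ) (y i) (z (τ⁻¹ i)) =
      ∑ b : Bool, ((if b then -1 else 1 : ℤ) : PowerSeries ℤ) * PowerSeries.X ^
        ((if b then -1 - (z (τ⁻¹ i) : ℤ) else z (τ⁻¹ i)) - (y i : ℤ)).natAbs := by
    intro i
    rw [Fintype.sum_bool, kerK]
    simp only [if_true, Bool.false_eq_true, if_false]
    have e1 : (-1 - (z (τ⁻¹ i) : ℤ) - (y i : ℤ)).natAbs = y i + z (τ⁻¹ i) + 1 := by omega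
    have e2 : ((z (τ⁻¹ i) : ℤ) - (y i : ℤ)).natAbs = max (y i) (z (τ⁻¹ i)) - min (y i) (z (τ⁻¹ i)) := by
      omega
    rw [e1, e2]
    push_cast; ring
  simp only [h2]
  rw [prod_univ_sum, mul_sum]
  refine sum_congr (Fintype.piFinset_univ).symm fun ε _ => ?_
  rw [prod_mul_distrib, prod_pow_eq_pow_sum, wDet]
  simp only [zAct, Pi.sub_apply]
  push_cast
  ring

/-- number of choices -/
def cntE (y z : ℕ → ℕ) : ℕ → ℕ
  | 0 => 2 * min (y 0) (z 0) + 1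
  | (i+1) => min (y (i+1)) (z (i+1)) - max (y i) (z i)

/-- step -/
def stepE : ℕ → ℕ
  | 0 => 1
  | (_+1) => 2

lemma step_cnt (y z : ℕ → ℕ) (i : ℕ) : stepE i * cntE y z i = gapE y z i := by
  cases i <;> simp [stepE, cntE, gapE]

/-- integral form of the Pieri condition -/
def pieriP (m : ℕ) (y z : ℕ → ℕ) (r : ℕ) (t : (Fin (m+1) → ℕ) × (Fin (m+1) → ℕ) × Bool) : Prop :=
  ((cond t.2.2 1 0) + ∑ i, (t.1 i + t.2.1 i)) = r ∧
  (∀ i : Fin (m+1), t.2.1 i + y i = z i + t.1 i) ∧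
  (∀ i : Fin m, max (y i) (z i) + 1 + t.2.1 i.succ ≤ z (i + 1)) ∧
  t.2.1 0 + (cond t.2.2 1 0) ≤ z 0

lemma bPieri_eq (m : ℕ) (y z : ℕ → ℕ) (r : ℕ) :
    bPieri (fun i : Fin (m+1) => (y i : ℚ) - ((i : ℕ) : ℚ)) (fun i : Fin (m+1) => (z i : ℚ) - ((i : ℕ) : ℚ)) r =
    Nat.card {t // pieriP m y z r t} := by
  unfold bPieri
  refine Nat.card_congr (Equiv.subtypeEquivRight ?_)
  rintro ⟨k, kb, b⟩
  unfold pieriP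
  refine and_congr_right fun _ => ?_
  have h1 : (∀ i : Fin (m+1), ((kb i : ℚ) - (k i : ℚ)) = ((z i : ℚ) - ((i : ℕ) : ℚ)) - ((y i : ℚ) - ((i : ℕ) : ℚ))) ↔
      (∀ i : Fin (m+1), kb i + y i = z i + k i) := by
    refine forall_congr' fun i => ⟨fun h => ?_, fun h => ?_⟩
    · have : (kb i : ℚ) + y i = z i + k i := by linarith
      exact_mod_cast this
    · have : (kb i : ℚ) + y i = z i + k i := by exact_mod_cast h
      linarith
  simp only [h1]
  refine and_congr_right fun hk => ?_
  rw [← and_assoc]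
  refine and_congr ?_ ?_
  · constructor
    · rintro ⟨h2, h3⟩ i
      have h2' := h2 i.castSucc (by simp)
      have h3' := h3 i.castSucc (by simp)
      have e : (⟨((i.castSucc : Fin (m+1)) : ℕ) + 1, by simp⟩ : Fin (m+1)) = i.succ := by ext; simp
      simp only [e] at h2' h3'
      simp only [Fin.val_castSucc] at h2' h3'
      push_cast at h2' h3'
      have hk' := hk i.castSucc
      simp only [Fin.val_castSucc] at hk'
      have hk'' : (kb i.castSucc : ℚ) + y i = z i + k i.castSucc := by exact_mod_cast hk'
      have a1 : (z i : ℚ) + 1 + kb i.succ ≤ z (i+1) := by linarith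
      have a2 : (y i : ℚ) + 1 + kb i.succ ≤ z (i+1) := by linarith
      have a1' : (z i ) + 1 + kb i.succ ≤ z (i+1) := by exact_mod_cast a1
      have a2' : (y i ) + 1 + kb i.succ ≤ z (i+1) := by exact_mod_cast a2

      omega
    · intro h
      have key : ∀ (i : Fin (m+1)) (hi : (i : ℕ) + 1 < m + 1),
          z i + 1 + kb ⟨(i:ℕ)+1, hi⟩ ≤ z (i+1) ∧ y i + 1 + kb ⟨(i:ℕ)+1, hi⟩ ≤ z (i+1) := by
        intro i hi
        have := h ⟨i, by omega⟩
        simp only [Fin.succ_mk] at this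
        omega
      refine ⟨fun i hi => ?_, fun i hi => ?_⟩
      · have := (key i hi).1
        have : (z i : ℚ) + 1 + kb ⟨(i:ℕ)+1, hi⟩ ≤ z (i+1) := by exact_mod_cast this
        push_cast
        linarith
      · have := (key i hi).2
        have : (y i : ℚ) + 1 + kb ⟨(i:ℕ)+1, hi⟩ ≤ z (i+1) := by exact_mod_cast this
        have hk'' : (kb i : ℚ) + y i = z i + k i := by exact_mod_cast hk i
        push_cast
        linarith
  · simp only [Nat.zero_lt_succ, forall_true_left, Fin.mk_zero]
    cases b
    · simp
    · simp only [if_true, cond_true]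
      constructor
      · intro h
        have : (kb 0 : ℚ) < z 0 := by simpa using h
        have : kb 0 < z 0 := by exact_mod_cast this
        omega
      · intro h
        have : (kb 0 : ℚ) < z 0 := by exact_mod_cast h
        simpa using this

lemma card_pieriP (m : ℕ) (y z : ℕ → ℕ) (r : ℕ) :
    Nat.card {t // pieriP m y z r t} =
      ((Fintype.piFinset (fun i : Fin (m+1) => range (cntE y z i))).filter
        (fun a => ∑ i : Fin (m+1), ((max (y i) (z i) - min (y i) (z i)) + stepE i * a i) = r)).card := by
  rw [← Fintype.card_coe, ← Nat.card_eq_fintype_card]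
  refine Nat.card_congr
    { toFun := fun t => ⟨Fin.cons (2 * min (t.1.1 0) (t.1.2.1 0) + cond t.1.2.2 1 0)
        (fun i => min (t.1.1 i.succ) (t.1.2.1 i.succ)), ?_⟩
      invFun := fun a => ⟨(Fin.cons (a.1 0 / 2 + (y 0 - z 0)) (fun i => a.1 i.succ + (y (i+1) - z (i+1))),
          Fin.cons (a.1 0 / 2 + (z 0 - y 0)) (fun i => a.1 i.succ + (z (i+1) - y (i+1))),
          decide (a.1 0 % 2 = 1)), ?_⟩
      left_inv := ?_
      right_inv := ?_ }
  · obtain ⟨⟨k, kb, b⟩, h1, h2, h3, h4⟩ := t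
    simp only at h1 h2 h3 h4
    simp only [mem_filter, Fintype.mem_piFinset, mem_range]
    constructor
    · intro i
      refine Fin.cases ?_ (fun i => ?_) i
      · have := h2 0
        simp only [Fin.cons_zero, Fin.val_zero, cntE] at this ⊢
        cases b <;> simp only [cond_true, cond_false] at h4 ⊢ <;> omega
      · have := h2 i.succ
        have := h3 i
        simp only [Fin.cons_succ, Fin.val_succ, cntE] at *
        omega
    · rw [← h1, Fin.sum_univ_succ, Fin.sum_univ_succ, ← add_assoc]
      congr 1
      · have := h2 0
        simp only [Fin.cons_zero, Fin.val_zero, stepE] at this ⊢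
        omega
      · refine sum_congr rfl fun i _ => ?_
        have := h2 i.succ
        simp only [Fin.cons_succ, Fin.val_succ, stepE] at this ⊢
        omega
  · obtain ⟨a, ha⟩ := a
    simp only [mem_filter, Fintype.mem_piFinset, mem_range] at ha
    obtain ⟨h1, h2⟩ := ha
    have h10 := h1 0
    simp only [Fin.val_zero, cntE] at h10
    have hb : (cond (decide (a 0 % 2 = 1)) 1 0) = a 0 % 2 := by
      rcases Nat.mod_two_eq_zero_or_one (a 0) with h | h <;> simp [h]
    refine ⟨?_, ?_, ?_, ?_⟩
    · simp only [hb]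
      rw [← h2, Fin.sum_univ_succ, Fin.sum_univ_succ, ← add_assoc]
      congr 1
      · simp only [Fin.cons_zero, Fin.val_zero, stepE]
        omega
      · refine sum_congr rfl fun i _ => ?_
        simp only [Fin.cons_succ, Fin.val_succ, stepE]
        omega
    · intro i
      refine Fin.cases ?_ (fun i => ?_) i
      · simp only [Fin.cons_zero, Fin.val_zero]; omega
      · simp only [Fin.cons_succ, Fin.val_succ]; omega
    · intro i
      have := h1 i.succ
      simp only [Fin.cons_succ, Fin.val_succ, cntE] at this ⊢
      omega
    · simp only [hb, Fin.cons_zero]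
      omega
  · rintro ⟨⟨k, kb, b⟩, h1, h2, h3, h4⟩
    simp only at h1 h2 h3 h4
    refine Subtype.ext (Prod.ext ?_ (Prod.ext ?_ ?_))
    · funext i
      refine Fin.cases ?_ (fun i => ?_) i
      · have := h2 0
        simp only [Fin.cons_zero, Fin.val_zero] at this ⊢
        cases b <;> simp only [cond_true, cond_false] <;> omega
      · have := h2 i.succ
        simp only [Fin.cons_succ, Fin.val_succ] at this ⊢
        omega
    · funext i
      refine Fin.cases ?_ (fun i => ?_) i
      · have := h2 0
        simp only [Fin.cons_zero, Fin.val_zero] at this ⊢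
        cases b <;> simp only [cond_true, cond_false] <;> omega
      · have := h2 i.succ
        simp only [Fin.cons_succ, Fin.val_succ] at this ⊢
        omega
    · cases b <;> simp
  · rintro ⟨a, ha⟩
    have hb : (cond (decide (a 0 % 2 = 1)) 1 0) = a 0 % 2 := by
      rcases Nat.mod_two_eq_zero_or_one (a 0) with h | h <;> simp [h]
    refine Subtype.ext ?_
    funext i
    refine Fin.cases ?_ (fun i => ?_) i
    · simp only [Fin.cons_zero, hb]; omega
    · simp only [Fin.cons_succ]; omega

/-- generating function of Pieri numbers -/
lemma gf_pieri (m : ℕ) (y z : ℕ → ℕ) :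
    (PowerSeries.mk fun r => (bPieri (fun i : Fin (m+1) => (y i : ℚ) - ((i : ℕ) : ℚ))
      (fun i : Fin (m+1) => (z i : ℚ) - ((i : ℕ) : ℚ)) r : ℤ)) =
    ∏ i : Fin (m+1), ∑ a ∈ range (cntE y z i), (PowerSeries.X : PowerSeries ℤ) ^
      ((max (y i) (z i) - min (y i) (z i)) + stepE i * a) := by
  rw [prod_univ_sum]
  ext r
  rw [PowerSeries.coeff_mk, bPieri_eq, card_pieriP, map_sum]
  simp only [prod_pow_eq_pow_sum, PowerSeries.coeff_X_pow]
  rw [sum_boole]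
  simp only [eq_comm]

lemma det_eq_gf (m : ℕ) (y z : ℕ → ℕ) (hy : ∀ i j, i < j → j < m + 1 → y i < y j)
    (hz : ∀ i j, i < j → j < m + 1 → z i < z j) :
    (Matrix.of fun i j : Fin (m+1) => kerK (PowerSeries.X : PowerSeries ℤ) (y i) (z j)).det =
    (1 - PowerSeries.X) * (1 - PowerSeries.X ^ 2) ^ m *
    (PowerSeries.mk fun r => (bPieri (fun i : Fin (m+1) => (y i : ℚ) - ((i : ℕ) : ℚ))
      (fun i : Fin (m+1) => (z i : ℚ) - ((i : ℕ) : ℚ)) r : ℤ)) := by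
  rw [det_kerK _ m y z hy hz, gf_pieri, prod_range]
  have h1 : ∀ i : Fin (m+1), (∑ a ∈ range (cntE y z i), (PowerSeries.X : PowerSeries ℤ) ^
      ((max (y i) (z i) - min (y i) (z i)) + stepE i * a)) * (1 - PowerSeries.X ^ stepE i) =
      PowerSeries.X ^ (max (y i) (z i) - min (y i) (z i)) * (1 - PowerSeries.X ^ gapE y z i) := by
    intro i
    simp only [pow_add, ← mul_sum, pow_mul]
    rw [mul_assoc, geom_sum_mul_neg, ← pow_mul, step_cnt]
  simp only [← h1, prod_mul_distrib]
  have h2 : ∏ i : Fin (m+1), (1 - (PowerSeries.X : PowerSeries ℤ) ^ stepE i) =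
      (1 - PowerSeries.X) * (1 - PowerSeries.X ^ 2) ^ m := by
    rw [Fin.prod_univ_succ]
    simp [stepE]
  rw [h2, mul_comm]

lemma wsum_eq {m : ℕ} (y z : Fin (m+1) → ℤ) (hy : StrictMono y) (hz : StrictMono z)
    (hy0 : ∀ i, 0 ≤ y i) (hz0 : ∀ i, 0 ≤ z i) (R : ℕ) :
    ∑ τ : Equiv.Perm (Fin (m+1)), ∑ ε : Fin (m+1) → Bool,
      wDet τ ε * mulN (m+1) R (zAct τ ε z - y) =
    ∑ p ∈ range (R+1) ×ˢ range (R+1), if p.1 + 2 * p.2 = R then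
      (bPieri (fun i : Fin (m+1) => (y i : ℚ) - ((i : ℕ) : ℚ))
        (fun i : Fin (m+1) => (z i : ℚ) - ((i : ℕ) : ℚ)) p.1 : ℤ) else 0 := by
  have hextW : ∀ w : Fin (m+1) → ℤ, StrictMono w → (∀ i, 0 ≤ w i) →
      ∃ W : ℕ → ℕ, (∀ i : Fin (m+1), w i = W i) ∧ (∀ i j, i < j → j < m + 1 → W i < W j) := by
    intro w hw hw0
    have h1 : ∀ i : Fin (m+1), w i =
        ((if h : (i:ℕ) < m + 1 then (w ⟨i, h⟩).toNat else 0 : ℕ) : ℤ) := by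
      intro i
      rw [dif_pos i.2]
      exact (Int.toNat_of_nonneg (hw0 i)).symm
    refine ⟨fun i => if h : i < m + 1 then (w ⟨i, h⟩).toNat else 0, h1, ?_⟩
    intro i j hij hj
    have hi : i < m + 1 := by omega
    have := hw (a := ⟨i, hi⟩) (b := ⟨j, hj⟩) hij
    have := hw0 ⟨i, hi⟩
    simp only [dif_pos hi, dif_pos hj]
    omega
  obtain ⟨Y, hY, hYm⟩ := hextW y hy hy0
  obtain ⟨Z, hZ, hZm⟩ := hextW z hz hz0
  have ey : y = fun i : Fin (m+1) => ((Y i : ℕ) : ℤ) := funext hY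
  have ez : z = fun i : Fin (m+1) => ((Z i : ℕ) : ℤ) := funext hZ
  clear hY hZ
  subst ey ez
  have hdet := det_eq_gf m Y Z hYm hZm
  rw [← sum_wDet_eq_det (fun i : Fin (m+1) => Y i) (fun i : Fin (m+1) => Z i)] at hdet
  simp only [Int.cast_natCast]
  set B := fun r => (bPieri (fun i : Fin (m+1) => (Y i : ℚ) - ((i : ℕ) : ℚ))
      (fun i : Fin (m+1) => (Z i : ℚ) - ((i : ℕ) : ℚ)) r : ℤ) with hB
  have h2 : ∑ τ : Equiv.Perm (Fin (m+1)), ∑ ε : Fin (m+1) → Bool,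
      wDet τ ε * mulN (m+1) R (zAct τ ε (fun i : Fin (m+1) => (Z i : ℤ)) - fun i : Fin (m+1) => (Y i : ℤ)) =
      PowerSeries.coeff R (serU * serV ^ (m+1) * ((1 - PowerSeries.X) * (1 - PowerSeries.X ^ 2) ^ m *
        PowerSeries.mk B)) := by
    rw [← hdet]
    simp only [mul_sum, map_sum]
    refine sum_congr rfl fun τ _ => sum_congr rfl fun ε _ => ?_
    rw [mulN, mul_left_comm, ← zsmul_eq_mul, map_zsmul, smul_eq_mul]
  rw [h2]
  have h3 : serU * serV ^ (m+1) * ((1 - PowerSeries.X) * (1 - PowerSeries.X ^ 2) ^ m *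
        PowerSeries.mk B) = PowerSeries.mk B * serV := by
    have : serU * serV ^ (m+1) * ((1 - PowerSeries.X) * (1 - PowerSeries.X ^ 2) ^ m *
        PowerSeries.mk B) = (serU * (1 - PowerSeries.X)) * (serV * (1 - PowerSeries.X ^ 2)) ^ m *
          (PowerSeries.mk B * serV) := by rw [mul_pow]; ring
    rw [this, serU_mul, serV_mul, one_pow, one_mul, one_mul]
  rw [h3, PowerSeries.coeff_mul]
  simp only [PowerSeries.coeff_mk, serV]
  rw [← sum_filter]
  simp only [mul_ite, mul_one, mul_zero]
  rw [← sum_filter]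
  refine sum_nbij' (fun p => (p.1, p.2 / 2)) (fun p => (p.1, 2 * p.2)) ?_ ?_ ?_ ?_ ?_
  · rintro ⟨a, b⟩ h
    simp only [mem_filter, HasAntidiagonal.mem_antidiagonal, Nat.even_iff, mem_product, mem_range] at h ⊢
    omega
  · rintro ⟨a, b⟩ h
    simp only [mem_filter, HasAntidiagonal.mem_antidiagonal, Nat.even_iff, mem_product, mem_range] at h ⊢
    omega
  · rintro ⟨a, b⟩ h
    simp only [mem_filter, HasAntidiagonal.mem_antidiagonal, Nat.even_iff] at h
    have h2 : 2 * (b / 2) = b := by omega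
    simp only [h2]
  · rintro ⟨a, b⟩ h
    simp
  · rintro ⟨a, b⟩ h
    rfl

lemma finsum_dom {m : ℕ} (y : Fin (m+1) → ℤ) (r R L : ℕ) (hr : r ≤ R)
    (hL : ∀ i, y i + R ≤ L) (F : (Fin (m+1) → ℚ) → PowerSeries ℤ) :
    ∑ᶠ lam ∈ {lam : Fin (m+1) → ℚ | DominantB lam ∧ ∀ i, ∃ z : ℤ, lam i = z},
      (bPieri (fun i : Fin (m+1) => (y i : ℚ) - ((i : ℕ) : ℚ)) lam r : ℤ) • F lam =
    ∑ z ∈ (Fintype.piFinset (fun _ : Fin (m+1) => Icc (0:ℤ) L)).filter StrictMono,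
      (bPieri (fun i : Fin (m+1) => (y i : ℚ) - ((i : ℕ) : ℚ))
        (fun i : Fin (m+1) => (z i : ℚ) - ((i : ℕ) : ℚ)) r : ℤ) •
          F (fun i : Fin (m+1) => (z i : ℚ) - ((i : ℕ) : ℚ)) := by
  classical
  rw [← sum_image (s := (Fintype.piFinset (fun _ : Fin (m+1) => Icc (0:ℤ) L)).filter StrictMono)
    (g := fun (z : Fin (m+1) → ℤ) (i : Fin (m+1)) => (z i : ℚ) - ((i : ℕ) : ℚ))
    (f := fun lam => (bPieri (fun i : Fin (m+1) => (y i : ℚ) - ((i : ℕ) : ℚ)) lam r : ℤ) • F lam)]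
  · apply finsum_mem_eq_sum_of_inter_support_eq
    ext lam
    simp only [Set.mem_inter_iff, Set.mem_ofPred_eq, coe_image, Set.mem_image, mem_coe, mem_filter,
      Fintype.mem_piFinset, mem_Icc]
    refine and_congr_left fun hs => ?_
    constructor
    · rintro ⟨⟨hm, h0, _⟩, hw⟩
      choose w hw using hw
      have hle : ∀ i, lam i - ((y i : ℚ) - ((i : ℕ) : ℚ)) ≤ r := by
        have hb : bPieri (fun i : Fin (m+1) => (y i : ℚ) - ((i : ℕ) : ℚ)) lam r ≠ 0 := by
          intro h
          apply hs
          simp [h]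
        unfold bPieri at hb
        obtain ⟨⟨⟨k, kb, b⟩, h1, h2, _⟩⟩ := (Nat.card_ne_zero.1 hb).1
        intro i
        simp only at h1 h2
        rw [← h2 i]
        have := Finset.single_le_sum (f := fun i => k i + kb i) (fun _ _ => Nat.zero_le _) (mem_univ i)
        have h4 : kb i ≤ r := by omega
        have h4' : (kb i : ℚ) ≤ r := by exact_mod_cast h4
        have : (0:ℚ) ≤ k i := by positivity
        linarith
      refine ⟨fun i => w i + (i : ℕ), ⟨fun i => ?_, ?_⟩, ?_⟩
      · have h1 := h0 i
        have h2 := hle i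
        rw [hw i] at h1 h2
        have h1' : 0 ≤ w i := by exact_mod_cast h1
        have h2' : w i + (i : ℕ) ≤ r + y i := by
          have : (w i : ℚ) + ((i : ℕ) : ℚ) ≤ r + y i := by linarith
          exact_mod_cast this
        have := hL i
        dsimp only
        omega
      · intro i j hij
        have h1 := hm hij.le
        rw [hw i, hw j] at h1
        have h1' : w i ≤ w j := by exact_mod_cast h1
        have : (i : ℕ) < j := hij
        simp only
        omega
      · funext i; rw [hw i]; push_cast; ring
    · rintro ⟨z, ⟨hz, hzm⟩, rfl⟩
      have hmono : Monotone (fun i : Fin (m+1) => (z i : ℚ) - ((i : ℕ) : ℚ)) := by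
        rw [Fin.monotone_iff_le_succ]
        intro i
        have h1 : z i.castSucc + 1 ≤ z i.succ := hzm (Fin.castSucc_lt_succ)
        have h2 : (z i.castSucc : ℚ) + 1 ≤ z i.succ := by exact_mod_cast h1
        simp only [Fin.val_castSucc, Fin.val_succ]
        push_cast
        linarith
      have hisint : ∀ i : Fin (m+1), ∃ w : ℤ, (z i : ℚ) - ((i : ℕ) : ℚ) = w := fun i =>
        ⟨z i - (i : ℕ), by push_cast; ring⟩
      refine ⟨⟨hmono, fun i => ?_, Or.inl hisint⟩, hisint⟩
      refine le_trans ?_ (hmono (Fin.zero_le i))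
      simpa using (hz 0).1
  · intro a _ b _ h
    funext i
    have := congrFun h i
    simp only at this
    have h2 : (a i : ℚ) = b i := by linarith
    exact_mod_cast h2

lemma per_k {m : ℕ} (y : Fin (m+1) → ℤ) (hy : StrictMono y) (hy0 : ∀ i, 0 ≤ y i)
    (mu : Fin (m+1) → ℚ) (R : ℕ) :
    ∑ τ : Equiv.Perm (Fin (m+1)), ∑ ε : Fin (m+1) → Bool, wDet τ ε •
      ∑ c ∈ piAntidiag (univ : Finset (CIdx (m+1))) R,
        kostantQ (rootsB (m+1)) (wAct τ ε (half y) - (mu + rhoB (m+1)) -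
          ∑ i, (c i : ℚ) • cRoot (m+1) i) =
    ∑ p ∈ range (R+1) ×ˢ range (R+1), if p.1 + 2 * p.2 = R then
      ∑ᶠ lam ∈ {lam : Fin (m+1) → ℚ | DominantB lam ∧ ∀ i, ∃ z : ℤ, lam i = z},
        (bPieri (fun i : Fin (m+1) => (y i : ℚ) - ((i : ℕ) : ℚ)) lam p.1 : ℤ) • KB (m+1) lam mu
      else 0 := by
  obtain ⟨L, hL⟩ : ∃ L : ℕ, ∀ i, y i + R ≤ L := by
    refine ⟨(∑ i, y i + R).toNat, fun i => ?_⟩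
    have := Finset.single_le_sum (f := y) (fun i _ => hy0 i) (mem_univ i)
    omega
  rw [core1, orbit _ y R L hy0 hL]
  have hhalf : ∀ z : Fin (m+1) → ℤ, half z =
      (fun i : Fin (m+1) => (z i : ℚ) - ((i : ℕ) : ℚ)) + rhoB (m+1) := by
    intro z; funext i; simp only [half, rhoB, Pi.add_apply]; ring
  have h1 : ∀ p ∈ range (R+1) ×ˢ range (R+1), (if p.1 + 2 * p.2 = R then
      ∑ᶠ lam ∈ {lam : Fin (m+1) → ℚ | DominantB lam ∧ ∀ i, ∃ z : ℤ, lam i = z},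
        (bPieri (fun i : Fin (m+1) => (y i : ℚ) - ((i : ℕ) : ℚ)) lam p.1 : ℤ) • KB (m+1) lam mu
      else 0) = ∑ z ∈ (Fintype.piFinset (fun _ : Fin (m+1) => Icc (0:ℤ) L)).filter StrictMono,
      (if p.1 + 2 * p.2 = R then (bPieri (fun i : Fin (m+1) => (y i : ℚ) - ((i : ℕ) : ℚ))
        (fun i : Fin (m+1) => (z i : ℚ) - ((i : ℕ) : ℚ)) p.1 : ℤ) else 0) •
          altF (mu + rhoB (m+1)) (half z) := by
    rintro ⟨r, s⟩ hp
    simp only [mem_product, mem_range] at hp ⊢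
    split_ifs with h
    · rw [finsum_dom y r R L (by omega) hL]
      refine sum_congr rfl fun z _ => ?_
      rw [hhalf]
      rfl
    · simp
  rw [sum_congr rfl h1, sum_comm]
  refine sum_congr rfl fun z hz => ?_
  simp only [mem_filter, Fintype.mem_piFinset, mem_Icc] at hz
  rw [wsum_eq y z hy hz.2 hy0 (fun i => (hz.1 i).1), sum_smul]

lemma morris_aux (m : ℕ) (ν μ : Fin (m+2) → ℤ) (hν : Monotone ν) (hν0 : ∀ i, 0 ≤ ν i)
    (hμ0 : ∀ i, 0 ≤ μ i) (mu' : Fin (m+1) → ℚ) (hmu' : mu' = fun i => (μ i.castSucc : ℚ))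
    (γ : Fin (m+2) → Fin (m+1) → ℚ)
    (hγ : ∀ j i, γ j i = if (i : ℕ) < (j : ℕ) then (ν i.castSucc : ℚ) else (ν i.succ : ℚ) + 1)
    (Rk : Fin (m+2) → ℤ) (hRk : ∀ j, Rk j = ν j + ((j : ℕ) : ℤ) - μ (Fin.last _) - (m + 1)) :
    KB (m+2) (fun i => (ν i : ℚ)) (fun i => (μ i : ℚ)) =
      ∑ j : Fin (m+2), if 0 ≤ Rk j then ((-1 : ℤ) ^ (m + 1 - (j : ℕ))) •
        ((PowerSeries.X : PowerSeries ℤ) ^ (Rk j).toNat *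
          ∑ p ∈ range ((Rk j).toNat + 1) ×ˢ range ((Rk j).toNat + 1),
            if p.1 + 2 * p.2 = (Rk j).toNat then
              ∑ᶠ lam ∈ {lam : Fin (m+1) → ℚ | DominantB lam ∧ ∀ i, ∃ z : ℤ, lam i = z},
                (bPieri (γ j) lam p.1 : ℤ) • KB (m+1) lam mu' else 0) else 0 := by
  unfold KB
  rw [sum_signed (fun x => kostantQ (rootsB (m+2)) (x - ((fun i => (μ i : ℚ)) + rhoB (m+2))))]
  refine sum_congr rfl fun j _ => ?_
  have hsplit : ((fun i => (μ i : ℚ)) + rhoB (m+2)) = Fin.snoc (α := fun _ => ℚ) (mu' + rhoB (m+1))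
      ((μ (Fin.last (m+1)) : ℚ) + ((m+1 : ℕ) : ℚ) + 1/2) := by
    funext i
    refine Fin.lastCases ?_ (fun i => ?_) i
    · simp [rhoB]; ring
    · simp [rhoB, hmu']
  simp only [hsplit, snoc_sub']
  rw [Fintype.sum_bool]
  have hneg : ∀ (τ : Equiv.Perm (Fin (m+1))) (ε : Fin (m+1) → Bool) (b : Fin (m+1) → ℚ),
      kostantQ (rootsB (m+2)) (Fin.snoc (α := fun _ => ℚ) b
        ((-1 : ℚ) * ((fun i => (ν i : ℚ)) + rhoB (m+2)) j -
          ((μ (Fin.last (m+1)) : ℚ) + ((m+1 : ℕ) : ℚ) + 1/2))) = 0 := by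
    intro τ ε b
    apply kostantQ_eq_zero
    intro R h
    simp only [Fin.snoc_last, Pi.add_apply, rhoB] at h
    have h1 : (0:ℚ) ≤ ν j := by exact_mod_cast hν0 j
    have h2 : (0:ℚ) ≤ μ (Fin.last (m+1)) := by exact_mod_cast hμ0 _
    have h3 : (0:ℚ) ≤ ((j:ℕ):ℚ) := by positivity
    have h4 : (0:ℚ) ≤ (R:ℚ) := by positivity
    have h5 : (0:ℚ) ≤ ((m+1:ℕ):ℚ) := by positivity
    linarith
  have hz1 : ∀ τ ε, kostantQ (rootsB (m+2)) (Fin.snoc (α := fun _ => ℚ)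
        (wAct τ ε (fun i => ((fun i => (ν i : ℚ)) + rhoB (m+2)) (j.succAbove i)) - (mu' + rhoB (m+1)))
        ((-1 : ℚ) * ((fun i => (ν i : ℚ)) + rhoB (m+2)) j -
          ((μ (Fin.last (m+1)) : ℚ) + ((m+1 : ℕ) : ℚ) + 1/2))) = 0 := fun τ ε => hneg τ ε _
  simp only [if_true, Bool.false_eq_true, if_false, mul_one, one_mul]
  simp only [hz1, smul_zero, sum_const_zero, zero_add]
  have hlast : ((fun i => (ν i : ℚ)) + rhoB (m+2)) j -
          ((μ (Fin.last (m+1)) : ℚ) + ((m+1 : ℕ) : ℚ) + 1/2) = (Rk j : ℚ) := by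
    rw [hRk]; simp only [Pi.add_apply, rhoB]; push_cast; ring
  simp only [hlast]
  split_ifs with hR
  · congr 1
    set R := (Rk j).toNat with hRdef
    have hR' : (Rk j : ℚ) = (R : ℚ) := by
      have : Rk j = (R : ℤ) := by omega
      rw [this]; simp
    simp only [hR', kostantQ_succ]
    set y : Fin (m+1) → ℤ := fun i => ν (j.succAbove i) + ((j.succAbove i : ℕ) : ℤ) with hydef
    have hyh : (fun i => ((fun i => (ν i : ℚ)) + rhoB (m+2)) (j.succAbove i)) = half y := by
      funext i; simp only [half, hydef, Pi.add_apply, rhoB]; push_cast; ring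
    have hγy : γ j = fun i : Fin (m+1) => (y i : ℚ) - ((i : ℕ) : ℚ) := by
      funext i
      rw [hγ]
      simp only [hydef]
      split_ifs with h
      · rw [Fin.succAbove_of_castSucc_lt _ _ (by simpa [Fin.lt_def] using h)]
        push_cast
        simp
      · rw [Fin.succAbove_of_le_castSucc _ _ (by simpa [Fin.le_def] using h)]
        push_cast
        simp only [Fin.val_succ]
        push_cast; ring
    have hym : StrictMono y := by
      intro a b hab
      have h1 : j.succAbove a < j.succAbove b := Fin.strictMono_succAbove j hab
      have h2 := hν h1.le
      have h3 : ((j.succAbove a : Fin (m+2)) : ℕ) < (j.succAbove b : Fin (m+2)) := h1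
      simp only [hydef]
      omega
    have hy0 : ∀ i, 0 ≤ y i := by
      intro i; simp only [hydef]; have := hν0 (j.succAbove i); omega
    have hk := per_k y hym hy0 mu' R
    unfold KB at hk
    rw [hγy, ← hk, hyh]
    simp only [mul_sum, mul_smul_comm]
  · have hz2 : ∀ b : Fin (m+1) → ℚ, kostantQ (rootsB (m+2)) (Fin.snoc (α := fun _ => ℚ) b (Rk j : ℚ)) = 0 := by
      intro b
      apply kostantQ_eq_zero
      intro S h
      simp only [Fin.snoc_last] at h
      have h : Rk j = (S : ℤ) := by exact_mod_cast h
      omega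
    simp only [hz2, smul_zero, sum_const_zero]

end MorrisProof

/-- Morris-type recurrence for type `B_n`:
`K^{B_n}_{ν,μ}(q) = ∑_{k, R_k ≥ 0} (-1)^{n-k} q^{R_k} ∑_{r+2m=R_k} ∑_λ b^λ_{γ_k,r} K^{B_{n-1}}_{λ,μ'}(q)`. -/
theorem morris_B (n : ℕ) (hn : 2 ≤ n) (ν μ : Fin n → ℤ)
    (hν : Monotone ν) (hν0 : ∀ i, 0 ≤ ν i)
    (hμ : Monotone μ) (hμ0 : ∀ i, 0 ≤ μ i) :
    KB n (fun i => (ν i : ℚ)) (fun i => (μ i : ℚ)) =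
      ∑ j : Fin n,
        if 0 ≤ ν j + ((j : ℕ) : ℤ) + 1 - μ ⟨n - 1, by omega⟩ - (n : ℤ) then
          ((-1 : ℤ) ^ (n - 1 - (j : ℕ))) •
            ((PowerSeries.X : PowerSeries ℤ) ^
                (ν j + ((j : ℕ) : ℤ) + 1 - μ ⟨n - 1, by omega⟩ - (n : ℤ)).toNat *
              ∑ p ∈ Finset.range ((ν j + ((j : ℕ) : ℤ) + 1 - μ ⟨n - 1, by omega⟩ - (n : ℤ)).toNat + 1) ×ˢ
                    Finset.range ((ν j + ((j : ℕ) : ℤ) + 1 - μ ⟨n - 1, by omega⟩ - (n : ℤ)).toNat + 1),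
                if p.1 + 2 * p.2 = (ν j + ((j : ℕ) : ℤ) + 1 - μ ⟨n - 1, by omega⟩ - (n : ℤ)).toNat then
                  ∑ᶠ lam ∈ {lam : Fin (n - 1) → ℚ | DominantB lam ∧ ∀ i, ∃ z : ℤ, lam i = z},
                    (bPieri
                        (fun i : Fin (n - 1) =>
                          if (i : ℕ) < (j : ℕ) then (ν ⟨(i : ℕ), by have := i.2; omega⟩ : ℚ)
                          else (ν ⟨(i : ℕ) + 1, by have := i.2; omega⟩ : ℚ) + 1)
                        lam p.1 : ℤ) •
                      KB (n - 1) lam (restrict1 fun i => (μ i : ℚ))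
                else 0)
        else 0 := by
  obtain ⟨m, rfl⟩ : ∃ m, n = m + 2 := ⟨n - 2, by omega⟩
  exact morris_aux m ν μ hν hν0 hμ0 (restrict1 fun i => (μ i : ℚ)) rfl
    (fun j i => if (i : ℕ) < (j : ℕ) then (ν ⟨(i : ℕ), by have := i.2; omega⟩ : ℚ)
      else (ν ⟨(i : ℕ) + 1, by have := i.2; omega⟩ : ℚ) + 1)
    (fun j i => rfl)
    (fun j => ν j + ((j : ℕ) : ℤ) + 1 - μ ⟨m + 2 - 1, by omega⟩ - ((m + 2 : ℕ) : ℤ))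
    (fun j => by
      have e : (⟨m + 2 - 1, by omega⟩ : Fin (m + 2)) = Fin.last (m + 1) := rfl
      rw [e]; push_cast; ring)
end

section
/- (Morris-type recurrence for C_n.) Let n ≥ 2 and let ν = (ν_n,…,ν_1), μ = (μ_n,…,μ_1) ∈ ℤ^n with ν_n ≥ … ≥ ν_1 ≥ 0 and μ_n ≥ … ≥ μ_1 ≥ 0. For k ∈ {1,…,n} set R_k = ν_k + k − μ_n − n and γ_k = (ν_n + 1, ν_{n−1} + 1, …, ν_{k+1} + 1, ν_{k−1}, …, ν_1) ∈ ℤ^{n−1} (a dominant weight of type C_{n−1}), and set μ' = (μ_{n−1},…,μ_1). Then K^{C_n}_{ν,μ}(q) = Σ_{k ∈ {1,…,n}, R_k ≥ 0} (−1)^{n−k} · Σ_{(r,m) ∈ ℕ², r + 2m = R_k} q^{R_k − m} · Σ_λ c^λ_{γ_k,r} · K^{C_{n−1}}_{λ,μ'}(q), where the innermost sum is over all dominant weights λ of type C_{n−1} (only finitely many terms are nonzero). -/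
open scoped BigOperators

open Classical in
lemma sum_elim_aux {α A : Type*} [AddCommGroup A] (htor : ∀ a : A, a = -a → a = 0)
    (s : Finset α) (f : α → A) (P : ℕ → α → Prop) (T : ℕ → α → α) (N : ℕ)
    (h : ∀ k < N, ∀ a ∈ s, (∀ l < k, ¬ P l a) → P k a →
      T k a ∈ s ∧ (∀ l < k, ¬ P l (T k a)) ∧ P k (T k a) ∧ T k (T k a) = a ∧ f (T k a) = - f a) :
    ∑ a ∈ s, f a = ∑ a ∈ s with ∀ k < N, ¬ P k a, f a := by
  induction N with
  | zero => simp
  | succ N ih =>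
    rw [ih (fun k hk => h k (by omega))]
    rw [← Finset.sum_filter_add_sum_filter_not (s.filter fun a => ∀ k < N, ¬ P k a) (fun a => P N a)]
    have h0 : ∑ a ∈ (s.filter fun a => ∀ k < N, ¬ P k a) with P N a, f a = 0 := by
      refine Finset.sum_involution (fun a _ => T N a) ?_ ?_ ?_ ?_
      · intro a ha
        simp only [Finset.mem_filter] at ha
        obtain ⟨_, _, _, _, h5⟩ := h N (by omega) a ha.1.1 ha.1.2 ha.2
        rw [h5]; simp
      · intro a ha hne heq
        simp only [Finset.mem_filter] at ha
        obtain ⟨_, _, _, _, h5⟩ := h N (by omega) a ha.1.1 ha.1.2 ha.2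
        rw [heq] at h5
        exact hne (htor _ h5)
      · intro a ha
        simp only [Finset.mem_filter] at ha ⊢
        obtain ⟨h1, h2, h3, _, _⟩ := h N (by omega) a ha.1.1 ha.1.2 ha.2
        exact ⟨⟨h1, h2⟩, h3⟩
      · intro a ha
        simp only [Finset.mem_filter] at ha
        obtain ⟨_, _, _, h4, _⟩ := h N (by omega) a ha.1.1 ha.1.2 ha.2
        exact h4
    rw [h0, zero_add, Finset.filter_filter]
    apply Finset.sum_congr _ (fun _ _ => rfl)
    ext a
    simp only [Finset.mem_filter]
    constructor
    · rintro ⟨h1, h2, h3⟩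
      refine ⟨h1, fun k hk => ?_⟩
      rcases Nat.lt_succ_iff_lt_or_eq.mp hk with h | rfl
      · exact h2 k h
      · exact h3
    · rintro ⟨h1, h2⟩
      exact ⟨h1, fun k hk => h2 k (by omega), h2 N (by omega)⟩

lemma sum_elim_aux' {α A : Type*} [AddCommGroup A] (htor : ∀ a : A, a = -a → a = 0)
    (s : Finset α) (f : α → A) (P : ℕ → α → Prop) (T : ℕ → α → α) (N : ℕ)
    (hd : DecidablePred fun a => ∀ k < N, ¬ P k a)
    (h : ∀ k < N, ∀ a ∈ s, (∀ l < k, ¬ P l a) → P k a →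
      T k a ∈ s ∧ (∀ l < k, ¬ P l (T k a)) ∧ P k (T k a) ∧ T k (T k a) = a ∧ f (T k a) = - f a) :
    ∑ a ∈ s, f a = ∑ a ∈ s with ∀ k < N, ¬ P k a, f a := by
  rw [sum_elim_aux htor s f P T N h]
  apply Finset.sum_congr _ (fun _ _ => rfl)
  ext a
  simp only [Finset.mem_filter]

/-- pairs `(y, z)` with `y ≤ x`, `y ≤ z` and `∑ (x - y) + (z - y) = r`. -/
noncomputable def pairsYZ {m : ℕ} (x : Fin m → ℤ) (r : ℕ) : Finset ((Fin m → ℤ) × (Fin m → ℤ)) :=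
  (Finset.Icc (fun i => x i - r) x ×ˢ Finset.Icc (fun i => x i - r) (fun i => x i + r)).filter
    fun p => (∀ i, p.1 i ≤ x i) ∧ (∀ i, p.1 i ≤ p.2 i) ∧ ∑ i, (x i + p.2 i - 2 * p.1 i) = r

lemma mem_pairsYZ {m : ℕ} (x : Fin m → ℤ) (r : ℕ) (p : (Fin m → ℤ) × (Fin m → ℤ)) :
    p ∈ pairsYZ x r ↔
      (∀ i, p.1 i ≤ x i) ∧ (∀ i, p.1 i ≤ p.2 i) ∧ ∑ i, (x i + p.2 i - 2 * p.1 i) = r := by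
  unfold pairsYZ
  rw [Finset.mem_filter, and_iff_right_iff_imp]
  rintro ⟨h1, h2, h3⟩
  have key : ∀ i, x i + p.2 i - 2 * p.1 i ≤ r := by
    intro i
    rw [← h3]
    exact Finset.single_le_sum (f := fun i => x i + p.2 i - 2 * p.1 i)
      (fun j _ => by have := h1 j; have := h2 j; omega) (Finset.mem_univ i)
  simp only [Finset.mem_product, Finset.mem_Icc, Pi.le_def]
  refine ⟨⟨fun i => ?_, h1⟩, fun i => ?_, fun i => ?_⟩ <;>
    (have := h1 i; have := h2 i; have := key i; omega)

/-- the noncancelling pairs -/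
def GoodYZ {m : ℕ} (x : Fin m → ℤ) (p : (Fin m → ℤ) × (Fin m → ℤ)) : Prop :=
  (∀ i : Fin m, ∀ h : (i : ℕ) + 1 < m, x i < p.1 ⟨i + 1, h⟩ ∧ p.2 i < p.1 ⟨i + 1, h⟩) ∧
    ∀ h : 0 < m, 0 < p.1 ⟨0, h⟩

open Classical in
theorem pieri_aux {m : ℕ} {A : Type*} [AddCommGroup A] (htor : ∀ a : A, a = -a → a = 0)
    (f : (Fin m → ℤ) → A)
    (hswap : ∀ z i j, i ≠ j → f (z ∘ Equiv.swap i j) = - f z)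
    (hneg : ∀ z k, f (Function.update z k (- z k)) = - f z)
    (x : Fin m → ℤ) (hx : StrictMono x) (hx0 : ∀ i, 0 < x i) (r : ℕ) :
    ∑ p ∈ pairsYZ x r, f p.2 = ∑ p ∈ pairsYZ x r with GoodYZ x p, f p.2 := by
  -- step 1
  rw [sum_elim_aux' htor (pairsYZ x r) (fun p => f p.2)
    (fun k p => ∃ h : k + 1 < m, p.1 ⟨m - 1 - k, by omega⟩ ≤ x ⟨m - 2 - k, by omega⟩)
    (fun k p => if h : k + 1 < m then
      (p.1 ∘ Equiv.swap ⟨m - 2 - k, by omega⟩ ⟨m - 1 - k, by omega⟩,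
       p.2 ∘ Equiv.swap ⟨m - 2 - k, by omega⟩ ⟨m - 1 - k, by omega⟩) else p) m (Classical.decPred _)]
  · set s1 := @Finset.filter _ (fun p => ∀ k < m, ¬ ∃ h : k + 1 < m,
      p.1 ⟨m - 1 - k, by omega⟩ ≤ x ⟨m - 2 - k, by omega⟩) (Classical.decPred _) (pairsYZ x r) with hs1
    have ms1 : ∀ p, p ∈ s1 ↔ p ∈ pairsYZ x r ∧
        ∀ i : Fin m, ∀ h : (i : ℕ) + 1 < m, x i < p.1 ⟨i + 1, h⟩ := by
      intro p
      rw [hs1]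
      refine (@Finset.mem_filter _ _ (_) _ _).trans ?_
      refine and_congr_right fun _ => ⟨fun h i hi => ?_, fun h k hk hk' => ?_⟩
      · have := h (m - 2 - i) (by omega)
        push Not at this
        have := this (by omega)
        have e1 : m - 1 - (m - 2 - (i : ℕ)) = i + 1 := by omega
        have e2 : m - 2 - (m - 2 - (i : ℕ)) = i := by omega
        simpa only [e1, e2] using this
      · obtain ⟨h1, h2⟩ := hk'
        have := h ⟨m - 2 - k, by omega⟩ (by simp only; omega)
        have e1 : m - 2 - k + 1 = m - 1 - k := by omega
        simp only [e1] at this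
        omega
    -- step 2
    rw [sum_elim_aux' htor s1 (fun p => f p.2)
      (fun _ p => ∃ h : 0 < m, p.1 ⟨0, h⟩ ≤ 0)
      (fun _ p => if h : 0 < m then
        (Function.update p.1 ⟨0, h⟩ (p.1 ⟨0, h⟩ - p.2 ⟨0, h⟩),
         Function.update p.2 ⟨0, h⟩ (- p.2 ⟨0, h⟩)) else p) 1 (Classical.decPred _)]
    · set s2 := @Finset.filter _ (fun p => ∀ k < 1, ¬ ∃ h : 0 < m, p.1 ⟨0, h⟩ ≤ 0) (Classical.decPred _) s1 with hs2
      have ms2 : ∀ p, p ∈ s2 ↔ p ∈ pairsYZ x r ∧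
          (∀ i : Fin m, ∀ h : (i : ℕ) + 1 < m, x i < p.1 ⟨i + 1, h⟩) ∧
          ∀ h : 0 < m, 0 < p.1 ⟨0, h⟩ := by
        intro p
        rw [hs2]
        refine (@Finset.mem_filter _ _ (_) _ _).trans ?_
        rw [ms1, and_assoc]
        simp
      -- step 3
      rw [sum_elim_aux' htor s2 (fun p => f p.2)
        (fun k p => ∃ h : k + 1 < m, p.1 ⟨k + 1, h⟩ ≤ p.2 ⟨k, by omega⟩)
        (fun k p => if h : k + 1 < m then
          (p.1, p.2 ∘ Equiv.swap ⟨k, by omega⟩ ⟨k + 1, h⟩) else p) m (Classical.decPred _)]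
      · apply Finset.sum_congr _ (fun _ _ => rfl)
        ext p
        simp only [Finset.mem_filter, ms2]
        unfold GoodYZ
        constructor
        · rintro ⟨⟨h1, h2, h3⟩, h4⟩
          refine ⟨h1, fun i hi => ⟨h2 i hi, ?_⟩, h3⟩
          have := h4 i i.2
          push Not at this
          exact this hi
        · rintro ⟨h1, h2, h3⟩
          refine ⟨⟨h1, fun i hi => (h2 i hi).1, h3⟩, ?_⟩
          rintro k hk ⟨h5, h6⟩
          have := (h2 ⟨k, hk⟩ h5).2
          exact absurd h6 (not_le.mpr this)
      · rintro k hk ⟨y, z⟩ hp hl ⟨hk1, hv⟩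
        simp only [hk1, dif_pos]
        simp only at hv hl
        rw [ms2, mem_pairsYZ] at hp
        obtain ⟨⟨h1, h2, h3⟩, h4, h5⟩ := hp
        simp only at h1 h2 h3 h4 h5
        have hne : (⟨k, hk⟩ : Fin m) ≠ ⟨k + 1, hk1⟩ := by simp
        refine ⟨?_, ?_, ?_, ?_, hswap _ _ _ hne⟩
        · rw [ms2, mem_pairsYZ]
          refine ⟨⟨h1, ?_, ?_⟩, h4, h5⟩
          · intro i
            simp only [Function.comp]
            rcases eq_or_ne i ⟨k, hk⟩ with rfl | hi
            · rw [Equiv.swap_apply_left]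
              have := h2 ⟨k + 1, hk1⟩
              have := h4 ⟨k, hk⟩ hk1
              have := h1 ⟨k, hk⟩
              simp only at *
              omega
            · rcases eq_or_ne i ⟨k + 1, hk1⟩ with rfl | hi'
              · rw [Equiv.swap_apply_right]; exact hv
              · rw [Equiv.swap_apply_of_ne_of_ne hi hi']; exact h2 i
          · rw [← h3]
            simp only [Finset.sum_sub_distrib, Finset.sum_add_distrib, Function.comp]
            rw [Equiv.sum_comp (Equiv.swap (⟨k, hk⟩ : Fin m) ⟨k + 1, hk1⟩) z]
        · rintro l hlk ⟨h6, h7⟩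
          refine hl l hlk ⟨h6, ?_⟩
          simp only [Function.comp] at h7
          rwa [Equiv.swap_apply_of_ne_of_ne (by simp; omega) (by simp; omega)] at h7
        · refine ⟨trivial, ?_⟩
          simp only [Function.comp]
          rw [Equiv.swap_apply_left]
          exact h2 _
        · ext i <;> simp
    · rintro k hk ⟨y, z⟩ hp hl ⟨hk1, hv⟩
      simp only [hk1, dif_pos]
      simp only at hv hl
      rw [ms1, mem_pairsYZ] at hp
      obtain ⟨⟨h1, h2, h3⟩, h4⟩ := hp
      simp only at h1 h2 h3 h4
      have g2 := h2 ⟨0, hk1⟩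
      have gx := hx0 ⟨0, hk1⟩
      refine ⟨?_, ?_, ?_, ?_, hneg _ _⟩
      · rw [ms1, mem_pairsYZ]
        refine ⟨⟨?_, ?_, ?_⟩, ?_⟩
        · intro i
          rcases eq_or_ne i ⟨0, hk1⟩ with rfl | hi
          · simp only [Function.update_self]; omega
          · simp only [Function.update_of_ne hi]; exact h1 i
        · intro i
          rcases eq_or_ne i ⟨0, hk1⟩ with rfl | hi
          · simp only [Function.update_self]; omega
          · simp only [Function.update_of_ne hi]; exact h2 i
        · rw [← h3]
          apply Finset.sum_congr rfl
          intro i _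
          rcases eq_or_ne i ⟨0, hk1⟩ with rfl | hi
          · simp only [Function.update_self]; ring
          · simp only [Function.update_of_ne hi]
        · intro i hi
          have hne : (⟨i + 1, hi⟩ : Fin m) ≠ ⟨0, hk1⟩ := by simp
          simp only [Function.update_of_ne hne]
          exact h4 i hi
      · omega
      · refine ⟨trivial, ?_⟩
        simp only [Function.update_self]; omega
      · simp
  · rintro k hk ⟨y, z⟩ hp hl ⟨hk1, hv⟩
    simp only [hk1, dif_pos]
    simp only at hv hl
    rw [mem_pairsYZ] at hp
    obtain ⟨h1, h2, h3⟩ := hp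
    simp only at h1 h2 h3
    have hne : (⟨m - 2 - k, by omega⟩ : Fin m) ≠ ⟨m - 1 - k, by omega⟩ := by simp; omega
    have hlt : (⟨m - 2 - k, by omega⟩ : Fin m) < ⟨m - 1 - k, by omega⟩ := by simp; omega
    have hx' := hx hlt
    refine ⟨?_, ?_, ?_, ?_, hswap _ _ _ hne⟩
    · rw [mem_pairsYZ]
      refine ⟨?_, fun i => h2 _, ?_⟩
      · intro i
        simp only [Function.comp]
        rcases eq_or_ne i ⟨m - 2 - k, by omega⟩ with rfl | hi
        · rw [Equiv.swap_apply_left]; exact hv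
        · rcases eq_or_ne i ⟨m - 1 - k, by omega⟩ with rfl | hi'
          · rw [Equiv.swap_apply_right]
            exact (h1 _).trans hx'.le
          · rw [Equiv.swap_apply_of_ne_of_ne hi hi']; exact h1 i
      · rw [← h3]
        simp only [Finset.sum_sub_distrib, Finset.sum_add_distrib, Function.comp, ← Finset.mul_sum]
        rw [Equiv.sum_comp _ z, Equiv.sum_comp _ y]
    · rintro l hlk ⟨h6, h7⟩
      refine hl l hlk ⟨h6, ?_⟩
      simp only [Function.comp] at h7
      rwa [Equiv.swap_apply_of_ne_of_ne (by simp; omega) (by simp; omega)] at h7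
    · refine ⟨trivial, ?_⟩
      simp only [Function.comp]
      rw [Equiv.swap_apply_right]
      exact h1 _
    · ext i <;> simp


/-- append a last coordinate -/
def sn {m : ℕ} (v : Fin m → ℚ) (c : ℚ) : Fin (m + 1) → ℚ := Fin.snoc (α := fun _ => ℚ) v c

@[simp] lemma sn_castSucc {m : ℕ} (v : Fin m → ℚ) (c : ℚ) (i : Fin m) : sn v c i.castSucc = v i := by
  simp [sn]

@[simp] lemma sn_last {m : ℕ} (v : Fin m → ℚ) (c : ℚ) : sn v c (Fin.last m) = c := by
  simp [sn]

lemma ext_sn {m : ℕ} {v w : Fin (m + 1) → ℚ} :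
    v = w ↔ (∀ i : Fin m, v i.castSucc = w i.castSucc) ∧ v (Fin.last m) = w (Fin.last m) := by
  constructor
  · rintro rfl; simp
  · rintro ⟨h1, h2⟩
    funext i
    exact Fin.lastCases h2 h1 i

lemma sn_inj {m : ℕ} {v w : Fin m → ℚ} {c d : ℚ} : sn v c = sn w d ↔ v = w ∧ c = d := by
  rw [ext_sn]; simp [funext_iff]

lemma single_castSucc_eq {m : ℕ} (i : Fin m) (c : ℚ) :
    (Pi.single i.castSucc c : Fin (m + 1) → ℚ) = sn (Pi.single i c) 0 := by
  rw [ext_sn]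
  constructor
  · intro j; simp [Pi.single_apply]
  · simp [Pi.single_apply, Fin.ext_iff]; intro h; have := i.2; omega

lemma single_last_eq {m : ℕ} (c : ℚ) :
    (Pi.single (Fin.last m) c : Fin (m + 1) → ℚ) = sn 0 c := by
  rw [ext_sn]
  constructor
  · intro j; simp [Pi.single_apply, Fin.ext_iff]; intro h; have := j.2; omega
  · simp

lemma sn_add {m : ℕ} (v w : Fin m → ℚ) (c d : ℚ) : sn v c + sn w d = sn (v + w) (c + d) := by
  rw [ext_sn]; simp

lemma sn_sub {m : ℕ} (v w : Fin m → ℚ) (c d : ℚ) : sn v c - sn w d = sn (v - w) (c - d) := by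
  rw [ext_sn]; simp

lemma mem_rootsC {n : ℕ} (v : Fin n → ℚ) : v ∈ rootsC n ↔
    (∃ i j : Fin n, j < i ∧ v = Pi.single i 1 - Pi.single j 1) ∨
    (∃ i j : Fin n, j < i ∧ v = Pi.single i 1 + Pi.single j 1) ∨
    (∃ i : Fin n, v = Pi.single i 2) := by
  simp only [rootsC, rootsD, Finset.mem_union, Finset.mem_image, Finset.mem_filter,
    Finset.mem_univ, true_and, Prod.exists, or_assoc, eq_comm]

/-- index set for the roots of `C_{m+1}` -/
abbrev RootIdx (m : ℕ) : Type := {α // α ∈ rootsC m} ⊕ ((Fin m × Bool) ⊕ Unit)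

/-- the root attached to an index -/
def rootOf (m : ℕ) : RootIdx m → (Fin (m + 1) → ℚ)
  | Sum.inl α => sn α 0
  | Sum.inr (Sum.inl (i, s)) => sn (Pi.single i (if s then -1 else 1)) 1
  | Sum.inr (Sum.inr _) => sn 0 2

lemma rootOf_mem (m : ℕ) (t : RootIdx m) : rootOf m t ∈ rootsC (m + 1) := by
  rw [mem_rootsC]
  rcases t with ⟨α, hα⟩ | ⟨i, s⟩ | u
  · rw [mem_rootsC] at hα
    rcases hα with ⟨i, j, h, rfl⟩ | ⟨i, j, h, rfl⟩ | ⟨i, rfl⟩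
    · refine Or.inl ⟨i.castSucc, j.castSucc, by simpa using h, ?_⟩
      simp [rootOf, single_castSucc_eq, sn_sub]
    · refine Or.inr (Or.inl ⟨i.castSucc, j.castSucc, by simpa using h, ?_⟩)
      simp [rootOf, single_castSucc_eq, sn_add]
    · refine Or.inr (Or.inr ⟨i.castSucc, ?_⟩)
      simp [rootOf, single_castSucc_eq]
  · cases s
    · refine Or.inr (Or.inl ⟨Fin.last m, i.castSucc, Fin.castSucc_lt_last i, ?_⟩)
      simp [rootOf, single_castSucc_eq, single_last_eq, sn_add]
    · refine Or.inl ⟨Fin.last m, i.castSucc, Fin.castSucc_lt_last i, ?_⟩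
      simp [rootOf, single_castSucc_eq, single_last_eq, sn_sub, Pi.single_neg]
  · refine Or.inr (Or.inr ⟨Fin.last m, ?_⟩)
    simp [rootOf, single_last_eq]

lemma rootOf_surj (m : ℕ) (v) (hv : v ∈ rootsC (m + 1)) : ∃ t, rootOf m t = v := by
  rw [mem_rootsC] at hv
  rcases hv with ⟨i, j, h, rfl⟩ | ⟨i, j, h, rfl⟩ | ⟨i, rfl⟩
  · rcases Fin.eq_castSucc_or_eq_last j with ⟨j, rfl⟩ | rfl
    · rcases Fin.eq_castSucc_or_eq_last i with ⟨i, rfl⟩ | rfl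
      · refine ⟨Sum.inl ⟨_, (mem_rootsC _).2 (Or.inl ⟨i, j, by simpa using h, rfl⟩)⟩, ?_⟩
        simp [rootOf, single_castSucc_eq, sn_sub]
      · refine ⟨Sum.inr (Sum.inl (j, true)), ?_⟩
        simp [rootOf, single_castSucc_eq, single_last_eq, sn_sub, Pi.single_neg]
    · exact absurd h (not_lt.mpr (Fin.le_last i))
  · rcases Fin.eq_castSucc_or_eq_last j with ⟨j, rfl⟩ | rfl
    · rcases Fin.eq_castSucc_or_eq_last i with ⟨i, rfl⟩ | rfl
      · refine ⟨Sum.inl ⟨_, (mem_rootsC _).2 (Or.inr (Or.inl ⟨i, j, by simpa using h, rfl⟩))⟩, ?_⟩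
        simp [rootOf, single_castSucc_eq, sn_add]
      · refine ⟨Sum.inr (Sum.inl (j, false)), ?_⟩
        simp [rootOf, single_castSucc_eq, single_last_eq, sn_add]
    · exact absurd h (not_lt.mpr (Fin.le_last i))
  · rcases Fin.eq_castSucc_or_eq_last i with ⟨i, rfl⟩ | rfl
    · refine ⟨Sum.inl ⟨_, (mem_rootsC _).2 (Or.inr (Or.inr ⟨i, rfl⟩))⟩, ?_⟩
      simp [rootOf, single_castSucc_eq]
    · refine ⟨Sum.inr (Sum.inr ()), ?_⟩
      simp [rootOf, single_last_eq]

lemma rootOf_inj (m : ℕ) : Function.Injective (rootOf m) := by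
  rintro (⟨α, hα⟩ | ⟨i, s⟩ | u) (⟨α', hα'⟩ | ⟨i', s'⟩ | u') h
  all_goals simp only [rootOf, sn_inj] at h
  · simp [h.1]
  · norm_num at h
  · norm_num at h
  · norm_num at h
  · have h1 := h.1
    have h2 := congrFun h1 i
    have hi : i = i' := by
      by_contra hne
      rw [Pi.single_eq_same, Pi.single_eq_of_ne hne] at h2
      cases s <;> simp at h2
    subst hi
    rw [Pi.single_eq_same, Pi.single_eq_same] at h2
    cases s <;> cases s' <;> norm_num at h2 <;> rfl
  · norm_num at h
  · norm_num at h
  · norm_num at h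
  · rfl

/-- indices versus roots -/
noncomputable def rootEquiv (m : ℕ) : RootIdx m ≃ {α // α ∈ rootsC (m + 1)} :=
  Equiv.ofBijective (fun t => ⟨rootOf m t, rootOf_mem m t⟩)
    ⟨fun a b h => rootOf_inj m (Subtype.ext_iff.mp h),
     fun ⟨v, hv⟩ => by obtain ⟨t, ht⟩ := rootOf_surj m v hv; exact ⟨t, Subtype.ext ht⟩⟩

lemma coeff_kostantQ {n : ℕ} (R : Finset (Fin n → ℚ)) (β : Fin n → ℚ) (k : ℕ) :
    PowerSeries.coeff k (kostantQ R β) =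
      (((Finset.piAntidiag (Finset.univ : Finset {α // α ∈ R}) k).filter
        fun M => ∑ α : {α // α ∈ R}, (M α : ℚ) • (α : Fin n → ℚ) = β).card : ℤ) := by
  rw [kostantQ, PowerSeries.coeff_mk]
  rw [Nat.cast_inj]
  apply Nat.subtype_card
  intro M
  rw [Finset.mem_filter, Finset.mem_piAntidiag]
  simp only [Finset.mem_univ, implies_true, and_true]

lemma coeff_kostantQ_idx (m : ℕ) (β : Fin (m + 1) → ℚ) (k : ℕ) :
    PowerSeries.coeff k (kostantQ (rootsC (m + 1)) β) =
      (((Finset.piAntidiag (Finset.univ : Finset (RootIdx m)) k).filter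
        fun M => ∑ t, (M t : ℚ) • rootOf m t = β).card : ℤ) := by
  rw [kostantQ, PowerSeries.coeff_mk]
  rw [Nat.cast_inj]
  have hc := Nat.subtype_card (p := fun M : RootIdx m → ℕ => ∑ t, M t = k ∧
    ∑ t, (M t : ℚ) • rootOf m t = β) ((Finset.piAntidiag (Finset.univ : Finset (RootIdx m)) k).filter
        fun M => ∑ t, (M t : ℚ) • rootOf m t = β) (by
      intro M
      rw [Finset.mem_filter, Finset.mem_piAntidiag]
      simp only [Finset.mem_univ, implies_true, and_true])
  rw [← hc]
  refine Nat.card_congr (Equiv.subtypeEquiv ((rootEquiv m).symm.arrowCongr (Equiv.refl ℕ)) ?_)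
  intro M
  have e1 : ∑ α, M α = ∑ t, M (rootEquiv m t) := (Equiv.sum_comp (rootEquiv m) M).symm
  have e2 : ∑ α : {α // α ∈ rootsC (m + 1)}, (M α : ℚ) • (α : Fin (m + 1) → ℚ) =
      ∑ t, (M (rootEquiv m t) : ℚ) • rootOf m t :=
    (Equiv.sum_comp (rootEquiv m)
      (fun α : {α // α ∈ rootsC (m + 1)} => (M α : ℚ) • (α : Fin (m + 1) → ℚ))).symm
  rw [e1, e2]
  simp only [Equiv.arrowCongr_apply, Equiv.symm_symm, Equiv.coe_refl, Function.comp, id]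

lemma sum_rootOf (m : ℕ) (M : RootIdx m → ℕ) (β : Fin (m + 1) → ℚ) :
    ∑ t, (M t : ℚ) • rootOf m t = β ↔
      (∑ α : {α // α ∈ rootsC m}, (M (Sum.inl α) : ℚ) • (α : Fin m → ℚ) =
        fun i => β i.castSucc + M (Sum.inr (Sum.inl (i, true))) - M (Sum.inr (Sum.inl (i, false)))) ∧
      ((∑ b : Fin m × Bool, M (Sum.inr (Sum.inl b)) + 2 * M (Sum.inr (Sum.inr ())) : ℕ) : ℚ)
        = β (Fin.last m) := by
  rw [ext_sn, funext_iff]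
  simp only [Fintype.sum_sum_type, Finset.sum_apply, Pi.smul_apply, smul_eq_mul,
    rootOf, Fintype.sum_prod_type, Fintype.sum_bool, Finset.univ_unique, Finset.sum_singleton,
    sn_castSucc, sn_last]
  refine and_congr (forall_congr' fun i => ?_) ?_
  · simp [Pi.single_apply, Finset.sum_add_distrib]
    constructor <;> intro h <;> linarith
  · simp
    rw [mul_comm]

lemma kostant_neg (m : ℕ) (β : Fin (m + 1) → ℚ) (h : β (Fin.last m) < 0) :
    kostantQ (rootsC (m + 1)) β = 0 := by
  ext k
  rw [coeff_kostantQ_idx, Finset.filter_false_of_mem]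
  · simp
  · intro M _ hM
    rw [sum_rootOf] at hM
    have := hM.2
    rw [← this] at h
    exact absurd h (not_lt.mpr (Nat.cast_nonneg _))

/-- triples `(r, c, ab)` -/
def tripU (m N : ℕ) : Finset (Σ _ : ℕ × ℕ, (Fin m × Bool → ℕ)) :=
  ((Finset.range (N + 1) ×ˢ Finset.range (N + 1)).filter fun p => p.1 + 2 * p.2 = N).sigma
    fun p => Finset.piAntidiag Finset.univ p.1

theorem kostant_rec (m N : ℕ) (β : Fin (m + 1) → ℚ) (h : β (Fin.last m) = N) :
    kostantQ (rootsC (m + 1)) β =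
      ∑ p ∈ Finset.range (N + 1) ×ˢ Finset.range (N + 1),
        if p.1 + 2 * p.2 = N then
          (PowerSeries.X : PowerSeries ℤ) ^ (p.1 + p.2) *
            ∑ ab ∈ Finset.piAntidiag (Finset.univ : Finset (Fin m × Bool)) p.1,
              kostantQ (rootsC m) (fun i => β i.castSucc + ab (i, true) - ab (i, false))
        else 0 := by
  ext k
  rw [← Finset.sum_filter]
  simp only [Finset.mul_sum]
  rw [← Finset.sum_sigma (s := (Finset.range (N + 1) ×ˢ Finset.range (N + 1)).filter
      fun p => p.1 + 2 * p.2 = N)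
    (t := fun p => Finset.piAntidiag (Finset.univ : Finset (Fin m × Bool)) p.1)
    (f := fun x => (PowerSeries.X : PowerSeries ℤ) ^ (x.1.1 + x.1.2) *
      kostantQ (rootsC m) (fun i => β i.castSucc + x.2 (i, true) - x.2 (i, false)))]
  rw [coeff_kostantQ_idx, map_sum]
  rw [Finset.card_eq_sum_card_fiberwise (t := tripU m N)
    (f := fun M : RootIdx m → ℕ =>
      (⟨(∑ b, M (Sum.inr (Sum.inl b)), M (Sum.inr (Sum.inr ()))), fun b => M (Sum.inr (Sum.inl b))⟩ :
        Σ _ : ℕ × ℕ, (Fin m × Bool → ℕ)))]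
  · rw [Nat.cast_sum]
    refine Finset.sum_congr rfl ?_
    rintro ⟨⟨r, c⟩, ab⟩ ht
    simp only [Finset.mem_sigma, Finset.mem_filter, Finset.mem_product, Finset.mem_range,
      Finset.mem_piAntidiag, Finset.mem_univ, implies_true, and_true] at ht
    obtain ⟨⟨_, hN⟩, hab⟩ := ht
    rw [PowerSeries.coeff_X_pow_mul']
    simp only
    have fib : ∀ M : RootIdx m → ℕ,
        (⟨(∑ b, M (Sum.inr (Sum.inl b)), M (Sum.inr (Sum.inr ()))), fun b => M (Sum.inr (Sum.inl b))⟩ :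
        Σ _ : ℕ × ℕ, (Fin m × Bool → ℕ)) = ⟨(r, c), ab⟩ ↔
        (∀ b, M (Sum.inr (Sum.inl b)) = ab b) ∧ M (Sum.inr (Sum.inr ())) = c := by
      intro M
      simp only [Sigma.mk.injEq, Prod.mk.injEq, heq_eq_eq, funext_iff]
      constructor
      · rintro ⟨⟨_, h2⟩, h3⟩; exact ⟨h3, h2⟩
      · rintro ⟨h1, h2⟩
        refine ⟨⟨?_, h2⟩, h1⟩
        rw [← hab]; exact Finset.sum_congr rfl fun b _ => h1 b
    split_ifs with hk
    · rw [coeff_kostantQ]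
      rw [Nat.cast_inj]
      refine Finset.card_nbij' (fun M α => M (Sum.inl α))
        (fun M1 => Sum.elim M1 (Sum.elim ab (fun _ => c))) ?_ ?_ ?_ ?_
      · intro M hM
        simp only [Finset.coe_filter, Finset.mem_filter, Set.mem_ofPred_eq, fib, sum_rootOf,
          Finset.mem_piAntidiag, Finset.mem_univ, implies_true, and_true] at hM ⊢
        obtain ⟨⟨h1, h2, h3⟩, h4, h5⟩ := hM
        simp only [h4] at h2
        refine ⟨?_, h2⟩
        simp only [Fintype.sum_sum_type, h4, hab, Finset.univ_unique, Finset.sum_singleton] at h1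
        have : M (Sum.inr (Sum.inr default)) = c := h5
        omega
      · intro M hM
        simp only [Finset.coe_filter, Finset.mem_filter, Set.mem_ofPred_eq, fib, sum_rootOf,
          Finset.mem_piAntidiag, Finset.mem_univ, implies_true, and_true] at hM ⊢
        obtain ⟨h1, h2⟩ := hM
        simp only [Sum.elim_inl, Sum.elim_inr, implies_true, and_true]
        refine ⟨?_, h2, ?_⟩
        · simp only [Fintype.sum_sum_type, Sum.elim_inl, Sum.elim_inr, hab, h1, Finset.univ_unique,
            Finset.sum_singleton]
          omega
        · rw [h, hab, hN]
      · intro M hM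
        simp only [Finset.coe_filter, Finset.mem_filter, Set.mem_ofPred_eq, fib] at hM
        funext t
        rcases t with α | b | u
        · rfl
        · simp [hM.2.1 b]
        · simp [← hM.2.2]
      · intro M _
        rfl
    · rw [Finset.filter_false_of_mem]
      · simp
      · intro M hM hf
        rw [fib] at hf
        simp only [Finset.mem_filter, Finset.mem_piAntidiag, Finset.mem_univ, implies_true,
          and_true] at hM
        have h1 := hM.1
        simp only [Fintype.sum_sum_type, hf.1, hab, Finset.univ_unique, Finset.sum_singleton] at h1
        have : M (Sum.inr (Sum.inr default)) = c := hf.2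
        omega
  · intro M hM
    simp only [Finset.coe_filter, Set.mem_ofPred_eq, sum_rootOf] at hM
    have h1 := hM.2.2
    rw [h] at h1
    have h2 := Nat.cast_injective h1
    simp only [tripU, Finset.coe_sigma, Set.mem_sigma_iff, Finset.mem_coe, Finset.mem_filter,
      Finset.mem_product, Finset.mem_range, Finset.mem_piAntidiag, Finset.mem_univ, implies_true,
      and_true]
    omega


/-- the cycle moving `j` to the last place -/
def cyc {m : ℕ} (j : Fin (m + 1)) : Equiv.Perm (Fin (m + 1)) :=
  (Fin.cycleRange (Fin.last m))⁻¹ * Fin.cycleRange j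

lemma cyc_self {m : ℕ} (j : Fin (m + 1)) : cyc j j = Fin.last m := by
  rw [cyc, Equiv.Perm.mul_apply, Equiv.Perm.inv_eq_iff_eq, Fin.cycleRange_self, Fin.cycleRange_self]

lemma cyc_succAbove {m : ℕ} (j : Fin (m + 1)) (i : Fin m) : cyc j (j.succAbove i) = i.castSucc := by
  rw [cyc, Equiv.Perm.mul_apply, Equiv.Perm.inv_eq_iff_eq, Fin.cycleRange_succAbove,
    ← Fin.succAbove_last, Fin.cycleRange_succAbove]

lemma sign_cyc {m : ℕ} (j : Fin (m + 1)) :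
    ((Equiv.Perm.sign (cyc j) : ℤˣ) : ℤ) = (-1) ^ (m - (j : ℕ)) := by
  rw [cyc, Equiv.Perm.sign_mul, Equiv.Perm.sign_inv, Fin.sign_cycleRange, Fin.sign_cycleRange]
  push_cast
  try simp only [Fin.val_last]
  obtain ⟨d, hd⟩ := Nat.exists_eq_add_of_le (Nat.lt_succ_iff.mp j.2)
  rw [← pow_add]
  have e1 : m - (j : ℕ) = d := by omega
  have e2 : m + (j : ℕ) = d + 2 * j := by omega
  rw [e1, e2, pow_add, pow_mul]
  simp

/-- extension of a permutation fixing the last point -/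
def extP {m : ℕ} (τ : Equiv.Perm (Fin m)) : Equiv.Perm (Fin (m + 1)) :=
  finSuccEquivLast.symm.permCongr (Equiv.optionCongr τ)

lemma extP_last {m : ℕ} (τ : Equiv.Perm (Fin m)) : extP τ (Fin.last m) = Fin.last m := by
  simp [extP, Equiv.permCongr_apply]

lemma extP_castSucc {m : ℕ} (τ : Equiv.Perm (Fin m)) (i : Fin m) :
    extP τ i.castSucc = (τ i).castSucc := by
  simp [extP, Equiv.permCongr_apply]

lemma sign_extP {m : ℕ} (τ : Equiv.Perm (Fin m)) :
    Equiv.Perm.sign (extP τ) = Equiv.Perm.sign τ := by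
  rw [extP, Equiv.Perm.sign_permCongr, Equiv.optionCongr_sign]

lemma perm_bij (m : ℕ) : Function.Bijective
    (fun q : Fin (m + 1) × Equiv.Perm (Fin m) => extP q.2 * cyc q.1) := by
  rw [Fintype.bijective_iff_injective_and_card]
  constructor
  · rintro ⟨j, τ⟩ ⟨j', τ'⟩ h
    simp only at h
    have hj : j = j' := by
      have h1 : (extP τ * cyc j) j = Fin.last m := by
        rw [Equiv.Perm.mul_apply, cyc_self, extP_last]
      have h2 : (extP τ' * cyc j') j' = Fin.last m := by
        rw [Equiv.Perm.mul_apply, cyc_self, extP_last]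
      rw [← h] at h2
      exact (extP τ * cyc j).injective (h1.trans h2.symm)
    subst hj
    have h3 := mul_right_cancel h
    congr 1
    ext i
    have := congrArg (fun e : Equiv.Perm (Fin (m + 1)) => e i.castSucc) h3
    simp only [extP_castSucc] at this
    exact congrArg Fin.val (Fin.castSucc_injective _ this)
  · simp [Fintype.card_perm, Nat.factorial_succ]

lemma KC_succ (m : ℕ) (lam mu : Fin (m + 1) → ℚ)
    (hneg : ∀ j, - (lam + rhoC (m + 1)) j - (mu + rhoC (m + 1)) (Fin.last m) < 0) :
    KC (m + 1) lam mu = ∑ j : Fin (m + 1), ((-1 : ℤ) ^ (m - (j : ℕ))) •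
      ∑ τ : Equiv.Perm (Fin m), ∑ ε : Fin m → Bool, wDet τ ε •
        kostantQ (rootsC (m + 1)) (sn
          (fun i => wAct τ ε (fun i => (lam + rhoC (m + 1)) (j.succAbove i)) i
            - (mu + rhoC (m + 1)) i.castSucc)
          ((lam + rhoC (m + 1)) j - (mu + rhoC (m + 1)) (Fin.last m))) := by
  unfold KC
  set x := lam + rhoC (m + 1) with hx
  set c := mu + rhoC (m + 1) with hc
  rw [← Equiv.sum_comp (Equiv.ofBijective _ (perm_bij m)), Fintype.sum_prod_type]
  refine Finset.sum_congr rfl fun j _ => ?_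
  rw [Finset.smul_sum]
  refine Finset.sum_congr rfl fun τ _ => ?_
  rw [← Equiv.sum_comp (Fin.snocEquiv (fun _ => Bool)), Fintype.sum_prod_type, Fintype.sum_bool]
  have hlast : ((extP τ * cyc j)⁻¹ : Equiv.Perm (Fin (m + 1))) (Fin.last m) = j := by
    rw [Equiv.Perm.inv_eq_iff_eq, Equiv.Perm.mul_apply, cyc_self, extP_last]
  have hcs : ∀ i : Fin m, ((extP τ * cyc j)⁻¹ : Equiv.Perm (Fin (m + 1))) i.castSucc =
      j.succAbove (τ⁻¹ i) := by
    intro i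
    rw [Equiv.Perm.inv_eq_iff_eq, Equiv.Perm.mul_apply, cyc_succAbove, extP_castSucc]
    simp
  have h0 : ∑ ε : Fin m → Bool, wDet (extP τ * cyc j) (Fin.snoc (α := fun _ => Bool) ε true) •
      kostantQ (rootsC (m + 1)) (wAct (extP τ * cyc j) (Fin.snoc (α := fun _ => Bool) ε true) x - c)
      = 0 := by
    refine Finset.sum_eq_zero fun ε _ => ?_
    rw [kostant_neg, smul_zero]
    have := hneg j
    simp only [Pi.sub_apply, wAct, hlast, Fin.snoc_last, if_true]
    linarith
  have h1 : ∑ ε : Fin m → Bool, wDet (extP τ * cyc j) (Fin.snoc (α := fun _ => Bool) ε false) •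
      kostantQ (rootsC (m + 1)) (wAct (extP τ * cyc j) (Fin.snoc (α := fun _ => Bool) ε false) x - c)
      = ((-1 : ℤ) ^ (m - (j : ℕ))) • ∑ ε : Fin m → Bool, wDet τ ε •
        kostantQ (rootsC (m + 1)) (sn (fun i => wAct τ ε (fun i => x (j.succAbove i)) i
            - c i.castSucc) (x j - c (Fin.last m))) := by
    rw [Finset.smul_sum]
    refine Finset.sum_congr rfl fun ε _ => ?_
    rw [smul_smul]
    congr 1
    · unfold wDet
      rw [Fin.prod_univ_castSucc, Equiv.Perm.sign_mul, sign_extP]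
      push_cast
      rw [sign_cyc]
      simp only [Fin.snoc_castSucc, Fin.snoc_last]
      simp
      ring
    · congr 1
      rw [ext_sn]
      simp only [Pi.sub_apply, wAct, hlast, hcs, Fin.snoc_last, Fin.snoc_castSucc, sn_castSucc,
        sn_last]
      simp
  refine Eq.trans ?_ ((congrArg₂ (· + ·) h0 h1).trans (zero_add _))
  rfl

/-- the antisymmetrised partition function -/
noncomputable def Fz {m : ℕ} (c : Fin m → ℚ) (z : Fin m → ℤ) : PowerSeries ℤ :=
  ∑ τ : Equiv.Perm (Fin m), ∑ ε : Fin m → Bool,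
    wDet τ ε • kostantQ (rootsC m) (wAct τ ε (fun i => (z i : ℚ)) - c)

lemma Fz_swap {m : ℕ} (c : Fin m → ℚ) (z : Fin m → ℤ) (i j : Fin m) (hij : i ≠ j) :
    Fz c (z ∘ Equiv.swap i j) = - Fz c z := by
  unfold Fz
  rw [← Equiv.sum_comp (Equiv.mulRight (Equiv.swap i j)), ← Finset.sum_neg_distrib]
  refine Finset.sum_congr rfl fun τ _ => ?_
  rw [← Finset.sum_neg_distrib]
  refine Finset.sum_congr rfl fun ε _ => ?_
  rw [← neg_smul]
  congr 1
  · simp [wDet, Equiv.Perm.sign_mul, Equiv.Perm.sign_swap hij]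
  · congr 2
    funext k
    simp [wAct]

lemma Fz_neg {m : ℕ} (c : Fin m → ℚ) (z : Fin m → ℤ) (k : Fin m) :
    Fz c (Function.update z k (- z k)) = - Fz c z := by
  unfold Fz
  rw [← Finset.sum_neg_distrib]
  refine Finset.sum_congr rfl fun τ _ => ?_
  have hinv : Function.Involutive
      (fun ε : Fin m → Bool => Function.update ε (τ k) (!ε (τ k))) := by
    intro ε; simp
  obtain ⟨g, hg⟩ : ∃ g : Equiv.Perm (Fin m → Bool),
      ∀ ε, g ε = Function.update ε (τ k) (!ε (τ k)) :=
    ⟨Function.Involutive.toPerm _ hinv, fun _ => rfl⟩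
  rw [← Equiv.sum_comp g, ← Finset.sum_neg_distrib]
  refine Finset.sum_congr rfl fun ε _ => ?_
  have he1 : g ε (τ k) = !ε (τ k) := by simp [hg]
  have he2 : ∀ i, i ≠ τ k → g ε i = ε i := by
    intro i hi
    simp [hg, Function.update_of_ne hi]
  generalize g ε = ε' at he1 he2 ⊢
  rw [← neg_smul]
  congr 1
  · simp only [wDet]
    rw [← mul_neg]
    congr 1
    rw [← Finset.mul_prod_erase _ _ (Finset.mem_univ (τ k)),
      ← Finset.mul_prod_erase (Finset.univ) (fun i => if ε i = true then (-1 : ℤ) else 1)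
        (Finset.mem_univ (τ k)), ← neg_mul]
    congr 1
    · simp only [he1]
      cases ε (τ k) <;> simp
    · refine Finset.prod_congr rfl fun i hi => ?_
      rw [he2 i (Finset.ne_of_mem_erase hi)]
  · congr 2
    funext i
    simp only [wAct]
    rcases eq_or_ne i (τ k) with rfl | hi
    · simp only [he1]
      cases ε (τ k) <;> simp
    · rw [he2 i hi, Function.update_of_ne]
      intro h
      apply hi
      rw [← h]; simp

/-- signed permutation action on index pairs -/
def bEquiv {m : ℕ} (τ : Equiv.Perm (Fin m)) (ε : Fin m → Bool) : Equiv.Perm (Fin m × Bool) where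
  toFun p := (τ⁻¹ p.1, xor p.2 (!ε p.1))
  invFun p := (τ p.1, xor p.2 (!ε (τ p.1)))
  left_inv p := by simp
  right_inv p := by simp

lemma weyl_shift {m : ℕ} (c : Fin m → ℚ) (x : Fin m → ℤ) (r : ℕ) :
    ∑ τ : Equiv.Perm (Fin m), ∑ ε : Fin m → Bool, wDet τ ε •
      ∑ ab ∈ Finset.piAntidiag (Finset.univ : Finset (Fin m × Bool)) r,
        kostantQ (rootsC m) (fun i => wAct τ ε (fun i => (x i : ℚ)) i - c i
          + ab (i, true) - ab (i, false)) =
    ∑ ab ∈ Finset.piAntidiag (Finset.univ : Finset (Fin m × Bool)) r,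
      Fz c (fun i => x i - ab (i, true) + ab (i, false)) := by
  unfold Fz
  symm
  rw [Finset.sum_comm]
  refine Finset.sum_congr rfl fun τ _ => ?_
  rw [Finset.sum_comm]
  refine Finset.sum_congr rfl fun ε _ => ?_
  rw [← Finset.smul_sum]
  congr 1
  refine Finset.sum_nbij' (fun ab => ab ∘ bEquiv τ ε) (fun ab => ab ∘ (bEquiv τ ε).symm) ?_ ?_ ?_ ?_ ?_
  · intro ab hab
    simp only [Finset.mem_piAntidiag, Finset.mem_univ, implies_true, and_true] at hab ⊢
    rw [← hab]
    exact Equiv.sum_comp (bEquiv τ ε) ab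
  · intro ab hab
    simp only [Finset.mem_piAntidiag, Finset.mem_univ, implies_true, and_true] at hab ⊢
    rw [← hab]
    exact Equiv.sum_comp (bEquiv τ ε).symm ab
  · intro ab _; funext t; simp
  · intro ab _; funext t; simp
  · intro ab _
    congr 1
    funext i
    simp only [wAct, Pi.sub_apply, Function.comp, bEquiv, Equiv.coe_fn_mk]
    cases h : ε i <;> simp <;> ring

lemma shift_pairs {m : ℕ} {A : Type*} [AddCommGroup A] (f : (Fin m → ℤ) → A) (x : Fin m → ℤ) (r : ℕ) :
    ∑ ab ∈ Finset.piAntidiag (Finset.univ : Finset (Fin m × Bool)) r,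
      f (fun i => x i - ab (i, true) + ab (i, false)) = ∑ p ∈ pairsYZ x r, f p.2 := by
  refine Finset.sum_nbij' (fun ab => (fun i => x i - ab (i, true),
      fun i => x i - ab (i, true) + ab (i, false)))
    (fun p t => if t.2 then (x t.1 - p.1 t.1).toNat else (p.2 t.1 - p.1 t.1).toNat) ?_ ?_ ?_ ?_ ?_
  · intro ab hab
    simp only [Finset.mem_piAntidiag, Finset.mem_univ, implies_true, and_true] at hab
    rw [mem_pairsYZ]
    refine ⟨fun i => by simp, fun i => by simp, ?_⟩
    rw [← hab, Fintype.sum_prod_type]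
    push_cast
    refine Finset.sum_congr rfl fun i _ => ?_
    rw [Fintype.sum_bool]
    ring
  · intro p hp
    rw [mem_pairsYZ] at hp
    obtain ⟨h1, h2, h3⟩ := hp
    simp only [Finset.mem_piAntidiag, Finset.mem_univ, implies_true, and_true]
    zify
    rw [← h3, Fintype.sum_prod_type]
    refine Finset.sum_congr rfl fun i _ => ?_
    rw [Fintype.sum_bool]
    have := h1 i; have := h2 i
    simp only [if_true, Bool.false_eq_true, if_false]
    omega
  · intro ab _
    funext ⟨i, s⟩
    cases s <;> simp
  · intro p hp
    rw [mem_pairsYZ] at hp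
    obtain ⟨h1, h2, h3⟩ := hp
    ext i
    · have := h1 i
      simp; omega
    · have := h1 i; have := h2 i
      simp; omega
  · intro ab _; rfl



noncomputable def lamOf {m : ℕ} (z : Fin m → ℤ) : Fin m → ℚ := fun i => (z i : ℚ) - ((i : ℕ) + 1)

lemma lamOf_inj {m : ℕ} : Function.Injective (lamOf (m := m)) := by
  intro z w h
  funext i
  have := congrFun h i
  simp only [lamOf] at this
  have h2 : (z i : ℚ) = w i := by linarith
  exact_mod_cast h2

lemma Fz_eq_KC {m : ℕ} (mu : Fin m → ℚ) (z : Fin m → ℤ) :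
    Fz (mu + rhoC m) z = KC m (lamOf z) mu := by
  unfold Fz KC
  have : lamOf z + rhoC m = fun i => (z i : ℚ) := by
    funext i
    simp [lamOf, rhoC]
  rw [this]

open Classical in
lemma cPieri_card {m : ℕ} (γ : Fin m → ℤ) (z : Fin m → ℤ) (r : ℕ) :
    cPieri (fun i => (γ i : ℚ)) (lamOf z) r =
      (((pairsYZ (fun i => γ i + (i : ℕ) + 1) r).filter
        (GoodYZ (fun i => γ i + (i : ℕ) + 1))).filter (fun p => p.2 = z)).card := by
  unfold cPieri
  rw [← Nat.card_eq_finsetCard]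
  set S := (((pairsYZ (fun i => γ i + (i : ℕ) + 1) r).filter
        (GoodYZ (fun i => γ i + (i : ℕ) + 1))).filter (fun p => p.2 = z)) with hS
  have key : ∀ a b : Fin m → ℕ, ((∑ i, (a i + b i)) = r ∧
    (∀ i, ((b i : ℚ) - (a i : ℚ)) = lamOf z i - (γ i : ℚ)) ∧
    (∀ i : Fin m, ∀ h : (i : ℕ) + 1 < m,
      lamOf z i ≤ lamOf z ⟨(i : ℕ) + 1, h⟩ - (b ⟨(i : ℕ) + 1, h⟩ : ℚ)) ∧
    (∀ i : Fin m, ∀ h : (i : ℕ) + 1 < m,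
      lamOf z i + (a i : ℚ) - (b i : ℚ) ≤
        lamOf z ⟨(i : ℕ) + 1, h⟩ - (b ⟨(i : ℕ) + 1, h⟩ : ℚ)) ∧
    (∀ h : 0 < m, (0 : ℚ) ≤ lamOf z ⟨0, h⟩ - (b ⟨0, h⟩ : ℚ))) ↔
    ((∀ i, (b i : ℤ) - a i = z i - (i : ℕ) - 1 - γ i) ∧
      ((fun i => γ i + (i : ℕ) + 1 - (a i : ℤ), z) : (Fin m → ℤ) × (Fin m → ℤ)) ∈ S) := by
    intro a b
    have h2 : (∀ i, ((b i : ℚ) - (a i : ℚ)) = lamOf z i - (γ i : ℚ)) ↔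
        (∀ i, (b i : ℤ) - a i = z i - (i : ℕ) - 1 - γ i) := by
      refine forall_congr' fun i => ?_
      rw [← @Int.cast_inj ℚ]
      simp only [lamOf]
      push_cast
      constructor <;> intro h <;> linarith
    rw [h2]
    simp only [hS, Finset.mem_filter, mem_pairsYZ, GoodYZ, and_true]
    have h3 : ∀ i : Fin m, ∀ h : (i : ℕ) + 1 < m,
      (lamOf z i ≤ lamOf z ⟨(i : ℕ) + 1, h⟩ - (b ⟨(i : ℕ) + 1, h⟩ : ℚ)) ↔
        z i < z ⟨(i : ℕ) + 1, h⟩ - b ⟨(i : ℕ) + 1, h⟩ := by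
      intro i h
      rw [← Int.add_one_le_iff, ← @Int.cast_le ℚ]
      simp only [lamOf]
      push_cast
      constructor <;> intro h <;> linarith
    have h4 : ∀ i : Fin m, ∀ h : (i : ℕ) + 1 < m,
      (lamOf z i + (a i : ℚ) - (b i : ℚ) ≤
        lamOf z ⟨(i : ℕ) + 1, h⟩ - (b ⟨(i : ℕ) + 1, h⟩ : ℚ)) ↔
        z i + a i - b i < z ⟨(i : ℕ) + 1, h⟩ - b ⟨(i : ℕ) + 1, h⟩ := by
      intro i h
      rw [← Int.add_one_le_iff, ← @Int.cast_le ℚ]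
      simp only [lamOf]
      push_cast
      constructor <;> intro h <;> linarith
    have h5 : ∀ h : 0 < m, ((0 : ℚ) ≤ lamOf z ⟨0, h⟩ - (b ⟨0, h⟩ : ℚ)) ↔
        0 < z ⟨0, h⟩ - b ⟨0, h⟩ := by
      intro h
      rw [Int.lt_iff_add_one_le, ← @Int.cast_le ℚ]
      simp only [lamOf]
      push_cast
      constructor <;> intro h <;> linarith
    simp only [h3, h4, h5]
    constructor
    · rintro ⟨e1, e2, e3, e4, e5⟩
      refine ⟨e2, ⟨⟨fun i => by omega, fun i => by have := e2 i; omega, ?_⟩, fun i h => ?_, fun h => ?_⟩⟩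
      · rw [← e1]
        push_cast
        refine Finset.sum_congr rfl fun i _ => ?_
        have := e2 i
        linarith
      · have := e2 i
        have := e2 ⟨i + 1, h⟩
        have := e3 i h
        have := e4 i h
        simp only at *
        push_cast at *
        constructor <;> linarith
      · have := e2 ⟨0, h⟩
        have := e5 h
        simp only at *
        push_cast at *
        linarith
    · rintro ⟨e2, ⟨⟨f1, f2, f3⟩, f4, f5⟩⟩
      refine ⟨?_, e2, fun i h => ?_, fun i h => ?_, fun h => ?_⟩
      · rw [← @Nat.cast_inj ℤ, ← f3]
        push_cast
        refine Finset.sum_congr rfl fun i _ => ?_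
        have := e2 i
        linarith
      · have := e2 i
        have := e2 ⟨i + 1, h⟩
        have := f4 i h
        simp only at *
        push_cast at *
        linarith [this.1, this.2]
      · have := e2 i
        have := e2 ⟨i + 1, h⟩
        have := f4 i h
        simp only at *
        push_cast at *
        linarith [this.1, this.2]
      · have := e2 ⟨0, h⟩
        have := f5 h
        simp only at *
        push_cast at *
        linarith
  refine Nat.card_congr (Equiv.ofBijective
    (fun t => (⟨(fun i => γ i + (i : ℕ) + 1 - (t.1.1 i : ℤ), z), ((key t.1.1 t.1.2).1 t.2).2⟩ :
      {p // p ∈ S})) ⟨?_, ?_⟩)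
  · rintro ⟨⟨a, b⟩, h⟩ ⟨⟨a', b'⟩, h'⟩ e
    have g := ((key a b).1 h).1
    have g' := ((key a' b').1 h').1
    simp only [Subtype.mk.injEq, Prod.mk.injEq, and_true] at e
    have ea : a = a' := by
      funext i
      have := congrFun e i
      omega
    subst ea
    have eb : b = b' := by
      funext i
      have := g i
      have := g' i
      omega
    subst eb
    rfl
  · rintro ⟨⟨y, w⟩, hp⟩
    have hw : w = z := (Finset.mem_filter.1 hp).2
    subst hw
    have hp' := (mem_pairsYZ _ _ _).1 (Finset.mem_filter.1 (Finset.mem_filter.1 hp).1).1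
    obtain ⟨p1, p2, p3⟩ := hp'
    simp only at p1 p2
    have ey : (fun i => γ i + (i : ℕ) + 1 - (((γ i + (i : ℕ) + 1 - y i).toNat : ℕ) : ℤ)) = y := by
      funext i
      have := p1 i
      omega
    refine ⟨⟨(fun i => (γ i + (i : ℕ) + 1 - y i).toNat, fun i => (w i - y i).toNat),
      (key _ _).2 ⟨?_, ?_⟩⟩, ?_⟩
    · intro i
      have := p1 i
      have := p2 i
      change (((w i - y i).toNat : ℕ) : ℤ) - ((γ i + (i : ℕ) + 1 - y i).toNat : ℕ) = _
      omega
    · simp only [ey]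
      exact hp
    · simp only [ey]

open Classical in
lemma finsum_good {m : ℕ} (γ : Fin m → ℤ) (mu : Fin m → ℚ) (r : ℕ) :
    ∑ p ∈ pairsYZ (fun i => γ i + (i : ℕ) + 1) r with GoodYZ (fun i => γ i + (i : ℕ) + 1) p,
      Fz (mu + rhoC m) p.2 =
    ∑ᶠ lam ∈ {lam : Fin m → ℚ | DominantC lam},
      (cPieri (fun i => (γ i : ℚ)) lam r : ℤ) • KC m lam mu := by
  set S := (pairsYZ (fun i => γ i + (i : ℕ) + 1) r).filter
        (GoodYZ (fun i => γ i + (i : ℕ) + 1)) with hS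
  have hdom : ∀ p ∈ S, DominantC (lamOf p.2) := by
    intro p hp
    obtain ⟨hp1, g1, g2⟩ := Finset.mem_filter.1 hp
    obtain ⟨q1, q2, q3⟩ := (mem_pairsYZ _ _ _).1 hp1
    have hmono : Monotone (lamOf p.2) := by
      cases m with
      | zero => intro i; exact i.elim0
      | succ m =>
        rw [Fin.monotone_iff_le_succ]
        intro i
        have h1 := (g1 i.castSucc (by simp)).2
        have h2 := q2 i.succ
        have e : (⟨(i.castSucc : ℕ) + 1, by simp⟩ : Fin (m + 1)) = i.succ := by ext; simp
        rw [e] at h1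
        have h3 : p.2 i.castSucc + 1 ≤ p.2 i.succ := by omega
        have h4 : ((p.2 i.castSucc : ℚ)) + 1 ≤ p.2 i.succ := by exact_mod_cast h3
        simp only [lamOf, Fin.val_castSucc, Fin.val_succ]
        push_cast
        linarith
    refine ⟨hmono, fun i => ?_, fun i => ⟨p.2 i - ((i : ℕ) + 1), by simp [lamOf]⟩⟩
    have hm : 0 < m := i.pos
    have h0 : (0 : ℚ) ≤ lamOf p.2 ⟨0, hm⟩ := by
      have h1 := g2 hm
      have h2 := q2 ⟨0, hm⟩
      have h3 : (1 : ℤ) ≤ p.2 ⟨0, hm⟩ := by omega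
      have h4 : (1 : ℚ) ≤ p.2 ⟨0, hm⟩ := by exact_mod_cast h3
      simp only [lamOf]
      push_cast
      linarith
    exact h0.trans (hmono (Fin.mk_le_of_le_val (Nat.zero_le _)))
  rw [Finset.sum_comp (Fz (mu + rhoC m)) (fun p : (Fin m → ℤ) × (Fin m → ℤ) => p.2)]
  rw [finsum_mem_eq_sum_of_inter_support_eq (t := (S.image (fun p => p.2)).image lamOf)]
  · rw [Finset.sum_image (fun a _ b _ h => lamOf_inj h)]
    refine Finset.sum_congr rfl fun z _ => ?_
    rw [Fz_eq_KC, cPieri_card, natCast_zsmul]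
  · ext lam
    simp only [Set.mem_inter_iff, Set.mem_ofPred_eq, Function.mem_support, Finset.coe_image,
      Set.mem_image, Finset.mem_coe, and_congr_left_iff]
    intro hne
    constructor
    · intro hd
      choose w hw using hd.2.2
      have hl : lam = lamOf (fun i => w i + ((i : ℕ) + 1)) := by
        funext i
        simp [lamOf, hw i]
      rw [hl, cPieri_card] at hne
      have hc : (S.filter (fun p => p.2 = fun i => w i + ((i : ℕ) + 1))).Nonempty := by
        rw [Finset.nonempty_iff_ne_empty]
        intro h0
        apply hne
        rw [h0]
        simp
      obtain ⟨p, hp⟩ := hc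
      obtain ⟨hp1, hp2⟩ := Finset.mem_filter.1 hp
      exact ⟨_, ⟨p, hp1, rfl⟩, by rw [hp2, hl]⟩
    · rintro ⟨_, ⟨p, hp, rfl⟩, rfl⟩
      exact hdom p hp

lemma weyl_pieri {m : ℕ} (γ : Fin m → ℤ) (hγ : Monotone γ) (hγ0 : ∀ i, 0 ≤ γ i)
    (mu : Fin m → ℚ) (r : ℕ) :
    ∑ τ : Equiv.Perm (Fin m), ∑ ε : Fin m → Bool, wDet τ ε •
      ∑ ab ∈ Finset.piAntidiag (Finset.univ : Finset (Fin m × Bool)) r,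
        kostantQ (rootsC m) (fun i => wAct τ ε (fun i => ((γ i + (i : ℕ) + 1 : ℤ) : ℚ)) i
          - (mu + rhoC m) i + ab (i, true) - ab (i, false)) =
    ∑ᶠ lam ∈ {lam : Fin m → ℚ | DominantC lam},
      (cPieri (fun i => (γ i : ℚ)) lam r : ℤ) • KC m lam mu := by
  have h1 := weyl_shift (mu + rhoC m) (fun i => γ i + (i : ℕ) + 1) r
  rw [h1, shift_pairs (Fz (mu + rhoC m)), pieri_aux, finsum_good]
  · intro a ha
    ext k
    have := congrArg (PowerSeries.coeff k) ha
    simp only [map_neg] at this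
    simp only [map_zero]
    omega
  · exact Fz_swap _
  · exact Fz_neg _
  · intro i j hij
    have := hγ hij.le
    have h2 : (i : ℕ) < j := hij
    simp only
    omega
  · intro i
    have := hγ0 i
    omega

lemma morris_term (m : ℕ) (γ : Fin m → ℤ) (hγ : Monotone γ) (hγ0 : ∀ i, 0 ≤ γ i)
    (mu : Fin m → ℚ) (N : ℕ) :
    ∑ τ : Equiv.Perm (Fin m), ∑ ε : Fin m → Bool, wDet τ ε • kostantQ (rootsC (m + 1))
      (sn (fun i => wAct τ ε (fun i => ((γ i + (i : ℕ) + 1 : ℤ) : ℚ)) i - (mu + rhoC m) i) N) =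
    ∑ p ∈ Finset.range (N + 1) ×ˢ Finset.range (N + 1),
      if p.1 + 2 * p.2 = N then
        (PowerSeries.X : PowerSeries ℤ) ^ (p.1 + p.2) *
          ∑ᶠ lam ∈ {lam : Fin m → ℚ | DominantC lam},
            (cPieri (fun i => (γ i : ℚ)) lam p.1 : ℤ) • KC m lam mu
      else 0 := by
  simp only [← weyl_pieri γ hγ hγ0 mu]
  simp only [kostant_rec m N _ (sn_last _ _), sn_castSucc]
  have hcomm : ∀ (f : Equiv.Perm (Fin m) → (Fin m → Bool) → ℕ × ℕ → PowerSeries ℤ)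
      (s : Finset (ℕ × ℕ)),
      ∑ τ, ∑ ε, wDet τ ε • ∑ p ∈ s, f τ ε p = ∑ p ∈ s, ∑ τ, ∑ ε, wDet τ ε • f τ ε p := by
    intro f s
    simp only [Finset.smul_sum]
    rw [Finset.sum_congr rfl fun τ _ => Finset.sum_comm, Finset.sum_comm]
  rw [hcomm]
  refine Finset.sum_congr rfl fun p _ => ?_
  split_ifs
  · simp only [Finset.mul_sum, Finset.smul_sum, mul_smul_comm]
  · simp


/-- Morris-type recurrence for type `C_n`:
`K^{C_n}_{ν,μ}(q) = ∑_{k, R_k ≥ 0} (-1)^{n-k} ∑_{r+2m=R_k} q^{R_k - m} ∑_λ c^λ_{γ_k,r} K^{C_{n-1}}_{λ,μ'}(q)`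
(note `R_k - m = r + m`). -/
theorem morris_C (n : ℕ) (hn : 2 ≤ n) (ν μ : Fin n → ℤ)
    (hν : Monotone ν) (hν0 : ∀ i, 0 ≤ ν i)
    (hμ : Monotone μ) (hμ0 : ∀ i, 0 ≤ μ i) :
    KC n (fun i => (ν i : ℚ)) (fun i => (μ i : ℚ)) =
      ∑ j : Fin n,
        if 0 ≤ ν j + ((j : ℕ) : ℤ) + 1 - μ ⟨n - 1, by omega⟩ - (n : ℤ) then
          ((-1 : ℤ) ^ (n - 1 - (j : ℕ))) •
            ∑ p ∈ Finset.range ((ν j + ((j : ℕ) : ℤ) + 1 - μ ⟨n - 1, by omega⟩ - (n : ℤ)).toNat + 1) ×ˢ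
                  Finset.range ((ν j + ((j : ℕ) : ℤ) + 1 - μ ⟨n - 1, by omega⟩ - (n : ℤ)).toNat + 1),
              if p.1 + 2 * p.2 = (ν j + ((j : ℕ) : ℤ) + 1 - μ ⟨n - 1, by omega⟩ - (n : ℤ)).toNat then
                (PowerSeries.X : PowerSeries ℤ) ^ (p.1 + p.2) *
                  ∑ᶠ lam ∈ {lam : Fin (n - 1) → ℚ | DominantC lam},
                    (cPieri
                        (fun i : Fin (n - 1) =>
                          if (i : ℕ) < (j : ℕ) then (ν ⟨(i : ℕ), by have := i.2; omega⟩ : ℚ)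
                          else (ν ⟨(i : ℕ) + 1, by have := i.2; omega⟩ : ℚ) + 1)
                        lam p.1 : ℤ) •
                      KC (n - 1) lam (restrict1 fun i => (μ i : ℚ))
              else 0
        else 0 := by
  obtain ⟨m, rfl⟩ : ∃ m, n = m + 1 := ⟨n - 1, by omega⟩
  rw [KC_succ]
  · refine Finset.sum_congr rfl fun j _ => ?_
    have hlast : (⟨m + 1 - 1, by omega⟩ : Fin (m + 1)) = Fin.last m := rfl
    rw [hlast]
    set R : ℤ := ν j + ((j : ℕ) : ℤ) + 1 - μ (Fin.last m) - ((m + 1 : ℕ) : ℤ) with hRd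
    set γ : Fin m → ℤ := fun i => if (i : ℕ) < (j : ℕ) then ν i.castSucc else ν i.succ + 1 with hγd
    have hx : (fun i => ((fun i => (ν i : ℚ)) + rhoC (m + 1)) (j.succAbove i)) =
        fun i => ((γ i + (i : ℕ) + 1 : ℤ) : ℚ) := by
      funext i
      by_cases h : (i : ℕ) < (j : ℕ)
      · rw [Fin.succAbove_of_castSucc_lt _ _ (by exact h)]
        simp [γ, h, rhoC]
        ring
      · rw [Fin.succAbove_of_le_castSucc _ _ (by simpa [Fin.le_def] using h)]
        simp [γ, h, rhoC]
        ring
    have hγ0 : ∀ i, 0 ≤ γ i := by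
      intro i
      simp only [γ]
      split_ifs
      · exact hν0 _
      · have := hν0 i.succ
        omega
    have hγ : Monotone γ := by
      intro a b hab
      have hab' : (a : ℕ) ≤ b := hab
      have h1 : ν a.castSucc ≤ ν b.castSucc := hν (by simpa using hab)
      have h2 : ν a.succ ≤ ν b.succ := hν (by simpa using hab)
      have h3 : ν a.castSucc ≤ ν a.succ := hν (Fin.castSucc_lt_succ).le
      simp only [γ]
      split_ifs <;> omega
    have hγc : (fun i : Fin (m + 1 - 1) =>
          if (i : ℕ) < (j : ℕ) then (ν ⟨(i : ℕ), by have := i.2; omega⟩ : ℚ)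
          else (ν ⟨(i : ℕ) + 1, by have := i.2; omega⟩ : ℚ) + 1) =
        (fun i : Fin m => (γ i : ℚ)) := by
      funext i
      simp only [γ]
      split_ifs
      · rfl
      · push_cast
        rfl
    rw [hγc]
    let mu' : Fin m → ℚ := restrict1 (fun i => (μ i : ℚ))
    have hc : ∀ i : Fin m, ((fun i => (μ i : ℚ)) + rhoC (m + 1)) i.castSucc =
        (mu' + rhoC m) i := fun i => rfl
    have hR : ((fun i => (ν i : ℚ)) + rhoC (m + 1)) j -
        ((fun i => (μ i : ℚ)) + rhoC (m + 1)) (Fin.last m) =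
        (R : ℚ) := by
      simp [rhoC, hRd]
      ring
    simp only [hx, hc, hR]
    split_ifs with h0
    · have hN : (R : ℚ) =
          ((R.toNat : ℕ) : ℚ) := by
        rw [← Int.cast_natCast, Int.toNat_of_nonneg h0]
      rw [hN, morris_term m γ hγ hγ0]
      rfl
    · have hz : ∀ v : Fin m → ℚ, kostantQ (rootsC (m + 1)) (sn v
          (R : ℚ)) = 0 := by
        intro v
        apply kostant_neg
        rw [sn_last]
        exact_mod_cast not_le.1 h0
      simp only [hz]
      simp
  · intro j
    have h1 : (0 : ℚ) ≤ ν j := by exact_mod_cast hν0 j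
    have h2 : (0 : ℚ) ≤ μ (Fin.last m) := by exact_mod_cast hμ0 _
    have h3 : (0 : ℚ) ≤ ((j : ℕ) : ℚ) := by positivity
    have h4 : (0 : ℚ) ≤ (m : ℚ) := by positivity
    simp only [Pi.add_apply, rhoC, Fin.val_last]
    linarith
end
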